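/- arXiv:1110.0898 — 11 statements merged into one kernel-verified Lean document; each statement's English description precedes it below -/
import Mathlib

section
/- Let n ≥ 2, let (x_k) be a sequence in ℝⁿ and (v_k) a sequence of unit vectors of ℝⁿ. Assume (i) ‖x_k‖ → ∞ as k → ∞, and (ii) for every unit vector v that is a cluster value of (v_k), the vector −v is not a cluster value of the sequence (x_k/‖x_k‖). Then the half-lines [x_k, v_k) := {x_k + t·v_k : t ≥ 0} leave every compact subset of ℝⁿ: for every R > 0 there exists N such that for all k ≥ N and all t ≥ 0 one has ‖x_k + t·v_k‖ > R. -/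
open Filter Topology

/-- half-lines `[x_k, v_k)` leave every compact subset of ℝⁿ. -/
theorem halfLines_leave_compacts
    (n : ℕ) (hn : 2 ≤ n)
    (x v : ℕ → EuclideanSpace ℝ (Fin n))
    (hv : ∀ k, ‖v k‖ = 1)
    (hx : Tendsto (fun k => ‖x k‖) atTop atTop)
    (hcluster : ∀ w : EuclideanSpace ℝ (Fin n), ‖w‖ = 1 →
      MapClusterPt w atTop v →
      ¬ MapClusterPt (-w) atTop (fun k => ‖x k‖⁻¹ • x k)) :
    ∀ R > 0, ∃ N : ℕ, ∀ k ≥ N, ∀ t : ℝ, 0 ≤ t → ‖x k + t • v k‖ > R := by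
  intro R hR
  by_contra hcon
  push Not at hcon
  have hfreq : ∃ᶠ k in atTop, ∃ t : ℝ, 0 ≤ t ∧ ‖x k + t • v k‖ ≤ R := by
    rw [frequently_atTop]
    intro N
    obtain ⟨k, hk, t, ht, h⟩ := hcon N
    exact ⟨k, hk, t, ht, h⟩
  obtain ⟨φ, hφ, hφt⟩ := extraction_of_frequently_atTop hfreq
  obtain ⟨w, hw, ψ, hψ, hlim⟩ := (isCompact_sphere (0 : EuclideanSpace ℝ (Fin n)) 1).tendsto_subseq
    (x := fun k => v (φ k)) (fun k => by simp [hv])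
  have hw1 : ‖w‖ = 1 := by simpa using hw
  have hθ : Tendsto (fun k => φ (ψ k)) atTop atTop := hφ.tendsto_atTop.comp hψ.tendsto_atTop
  have hxθ : Tendsto (fun k => ‖x (φ (ψ k))‖) atTop atTop := hx.comp hθ
  have hzero : Tendsto (fun k => ‖x (φ (ψ k))‖⁻¹ • x (φ (ψ k)) + v (φ (ψ k))) atTop (𝓝 0) := by
    have hb : Tendsto (fun k => 2 * R * ‖x (φ (ψ k))‖⁻¹) atTop (𝓝 0) := by
      simpa using (tendsto_inv_atTop_zero.comp hxθ).const_mul (2 * R)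
    refine squeeze_zero_norm' ?_ hb
    filter_upwards [hxθ.eventually_gt_atTop 0] with k hk
    obtain ⟨t, ht, h⟩ := hφt (ψ k)
    generalize φ (ψ k) = m at *
    have h1 : ‖x m‖ - t ≤ R ∧ t - ‖x m‖ ≤ R := by
      have hn1 : ‖t • v m‖ = t := by rw [norm_smul, hv, mul_one, Real.norm_of_nonneg ht]
      have ha := norm_sub_le (x m + t • v m) (t • v m)
      have hb := norm_sub_le (x m + t • v m) (x m)
      rw [add_sub_cancel_right] at ha
      rw [add_sub_cancel_left] at hb
      constructor <;> linarith
    have h2 : ‖x m‖⁻¹ • x m + v m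
        = ‖x m‖⁻¹ • ((x m + t • v m) + (‖x m‖ - t) • v m) := by
      have : (x m + t • v m) + (‖x m‖ - t) • v m = x m + ‖x m‖ • v m := by module
      rw [this, smul_add, smul_smul, inv_mul_cancel₀ hk.ne', one_smul]
    rw [h2, norm_smul, norm_inv, norm_norm, mul_comm]
    gcongr
    have h3 : ‖(‖x m‖ - t) • v m‖ ≤ R := by
      rw [norm_smul, hv, mul_one, Real.norm_eq_abs, abs_le]
      constructor <;> linarith
    linarith [norm_add_le (x m + t • v m) ((‖x m‖ - t) • v m)]
  have hlim' : Tendsto (fun k => v (φ (ψ k))) atTop (𝓝 w) := hlim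
  have hu : Tendsto (fun k => ‖x (φ (ψ k))‖⁻¹ • x (φ (ψ k))) atTop (𝓝 (-w)) := by
    simpa using hzero.sub hlim'
  exact hcluster w hw1 (MapClusterPt.of_comp hθ hlim'.mapClusterPt)
    (MapClusterPt.of_comp hθ hu.mapClusterPt)
end

section
/- Let n ≥ 2. For each k ∈ ℕ let p_k : ℝⁿ → ℝⁿ be the affine conformal map p_k(x) = λ_k • (A_k x) + b_k, where λ_k > 0, A_k is a linear isometric automorphism of ℝⁿ and b_k ∈ ℝⁿ. Assume the sequence (p_k) tends to infinity in the affine conformal group, i.e. max(λ_k, 1/λ_k, ‖b_k‖) → ∞. Then there is a strictly increasing map φ : ℕ → ℕ such that at least one of the following holds: (1) for every r > 0, every unit vector w and every ε > 0 there exist a unit vector w′ and ε′ > 0 with {v ∈ Sⁿ⁻¹ : ‖v − w′‖ ≤ ε′} ⊆ {v ∈ Sⁿ⁻¹ : ‖v − w‖ ≤ ε}, such that for every R > 0 there is N with ‖p_{φ(k)}(t • v)‖ > R for all k ≥ N, all t ≥ 1/r and all v ∈ Sⁿ⁻¹ with ‖v − w′‖ ≤ ε′; or (2) there exist affine conformal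 maps l_k(y) = m_k • (B_k y) + c_k with m_k → m_∞ ∈ (0,∞), B_k converging (in operator norm) to a linear isometric automorphism B_∞, c_k → c_∞ ∈ ℝⁿ, and positive reals s_k with s_k → 0, such that l_k(p_{φ(k)}(x)) = s_k • x for all x ∈ ℝⁿ and all k. -/
open Filter Topology

lemma aux_near {E : Type*} [NormedAddCommGroup E] [NormedSpace ℝ E] (h : 1 < Module.rank ℝ E)
    (w d : E) (hw : ‖w‖ = 1) (ε : ℝ) (hε : 0 < ε) :
    ∃ w' : E, ‖w'‖ = 1 ∧ ‖w' - w‖ ≤ ε / 2 ∧ w' ≠ d := by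
  by_cases hwd : w = d
  · subst hwd
    have hp := isPreconnected_sphere h (0 : E) 1
    have hws : w ∈ Metric.sphere (0 : E) 1 := by simpa using hw
    have hnt : (Metric.sphere (0 : E) 1).Nontrivial := by
      refine ⟨w, hws, -w, by simpa using hw, ?_⟩
      intro hh
      have h2 : (2 : ℝ) • w = 0 := by
        rw [two_smul]
        exact eq_neg_iff_add_eq_zero.mp hh
      have : w = 0 := (smul_eq_zero.mp h2).resolve_left two_ne_zero
      simp [this] at hw
    have hacc := hp.preperfect_of_nontrivial hnt w hws
    rw [accPt_iff_nhds] at hacc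
    obtain ⟨y, ⟨hy1, hy2⟩, hy3⟩ := hacc _ (Metric.ball_mem_nhds w (half_pos hε))
    refine ⟨y, by simpa using hy2, ?_, hy3⟩
    rw [Metric.mem_ball, dist_eq_norm] at hy1
    exact hy1.le
  · exact ⟨w, hw, by simp; positivity, hwd⟩

lemma aux_est {E : Type*} [NormedAddCommGroup E] [NormedSpace ℝ E] (v d : E)
    (hv : ‖v‖ = 1) (hd : ‖d‖ = 1) (a β η : ℝ) (ha : 0 ≤ a) (hβ : 0 ≤ β) (h : η ≤ ‖v - d‖) :
    a * η ≤ 2 * ‖a • v - β • d‖ ∧ β * η ≤ 2 * ‖a • v - β • d‖ := by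
  have h1 : |a - β| ≤ ‖a • v - β • d‖ := by
    have := abs_norm_sub_norm_le (a • v) (β • d)
    simpa [norm_smul, hv, hd, abs_of_nonneg ha, abs_of_nonneg hβ] using this
  have h2 : a * ‖v - d‖ ≤ ‖a • v - β • d‖ + |a - β| := by
    have : a • (v - d) = (a • v - β • d) - (a - β) • d := by module
    have h3 := norm_sub_le (a • v - β • d) ((a - β) • d)
    rw [← this] at h3
    simpa [norm_smul, hd, abs_of_nonneg ha] using h3
  have h4 : β * ‖v - d‖ ≤ ‖a • v - β • d‖ + |a - β| := by
    have : β • (v - d) = (a • v - β • d) - (a - β) • v := by module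
    have h3 := norm_sub_le (a • v - β • d) ((a - β) • v)
    rw [← this] at h3
    simpa [norm_smul, hv, abs_of_nonneg hβ] using h3
  have h5 := mul_le_mul_of_nonneg_left h ha
  have h6 := mul_le_mul_of_nonneg_left h hβ
  constructor <;> linarith

lemma aux_compact {E : Type*} [NormedAddCommGroup E] [NormedSpace ℝ E] [FiniteDimensional ℝ E]
    (B : ℕ → (E ≃ₗᵢ[ℝ] E)) : ∃ (Binf : E ≃ₗᵢ[ℝ] E) (ψ : ℕ → ℕ), StrictMono ψ ∧
      Tendsto (fun k => (B (ψ k)).toLinearIsometry.toContinuousLinearMap) atTop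
        (𝓝 Binf.toLinearIsometry.toContinuousLinearMap) := by
  have : ProperSpace (E →L[ℝ] E) := FiniteDimensional.proper ℝ _
  obtain ⟨L, -, ψ, hψ, hL⟩ := tendsto_subseq_of_bounded
    (Metric.isBounded_closedBall (x := (0 : E →L[ℝ] E)) (r := 1))
    (x := fun k => (B k).toLinearIsometry.toContinuousLinearMap)
    (fun k => by
      simpa using (B k).toLinearIsometry.norm_toContinuousLinearMap_le)
  have hiso : ∀ x, ‖L x‖ = ‖x‖ := by
    intro x
    have h1 : Tendsto (fun k => ‖(B (ψ k)).toLinearIsometry.toContinuousLinearMap x‖) atTop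
        (𝓝 ‖L x‖) := ((ContinuousLinearMap.apply ℝ E x).continuous.tendsto L |>.comp hL).norm
    have h2 : (fun k => ‖(B (ψ k)).toLinearIsometry.toContinuousLinearMap x‖) = fun _ => ‖x‖ := by
      funext k
      simp
    rw [h2] at h1
    exact tendsto_nhds_unique h1 tendsto_const_nhds
  let Li : E →ₗᵢ[ℝ] E := ⟨L.toLinearMap, hiso⟩
  refine ⟨Li.toLinearIsometryEquiv rfl, ψ, hψ, ?_⟩
  have he : (Li.toLinearIsometryEquiv rfl).toLinearIsometry.toContinuousLinearMap = L := by
    ext x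
    rfl
  rw [he]
  exact hL

/-- dynamics of an unbounded sequence of affine conformal maps of ℝⁿ,
read through the conformal chart. Either (after extraction) truncated cones over
suitable spherical subcaps escape every compact set, or the sequence, corrected
by converging conformal maps, is a sequence of homotheties of ratios tending to 0. -/
theorem unbounded_conformal_affine_dichotomy
    (n : ℕ) (hn : 2 ≤ n)
    (lam : ℕ → ℝ) (hlam : ∀ k, 0 < lam k)
    (A : ℕ → (EuclideanSpace ℝ (Fin n) ≃ₗᵢ[ℝ] EuclideanSpace ℝ (Fin n)))
    (b : ℕ → EuclideanSpace ℝ (Fin n))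
    (hunbounded : Tendsto (fun k => max (max (lam k) (lam k)⁻¹) ‖b k‖) atTop atTop) :
    ∃ φ : ℕ → ℕ, StrictMono φ ∧
      ((∀ r > (0 : ℝ), ∀ w : EuclideanSpace ℝ (Fin n), ‖w‖ = 1 → ∀ ε > (0 : ℝ),
          ∃ w' : EuclideanSpace ℝ (Fin n), ‖w'‖ = 1 ∧ ∃ ε' > (0 : ℝ),
            ({v : EuclideanSpace ℝ (Fin n) | ‖v‖ = 1 ∧ ‖v - w'‖ ≤ ε'} ⊆
              {v : EuclideanSpace ℝ (Fin n) | ‖v‖ = 1 ∧ ‖v - w‖ ≤ ε}) ∧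
            ∀ R > (0 : ℝ), ∃ N : ℕ, ∀ k ≥ N, ∀ t : ℝ, 1 / r ≤ t →
              ∀ v : EuclideanSpace ℝ (Fin n), ‖v‖ = 1 → ‖v - w'‖ ≤ ε' →
                ‖lam (φ k) • (A (φ k) (t • v)) + b (φ k)‖ > R)
        ∨
       (∃ (m : ℕ → ℝ) (B : ℕ → (EuclideanSpace ℝ (Fin n) ≃ₗᵢ[ℝ] EuclideanSpace ℝ (Fin n)))
          (c : ℕ → EuclideanSpace ℝ (Fin n))
          (minf : ℝ) (Binf : EuclideanSpace ℝ (Fin n) ≃ₗᵢ[ℝ] EuclideanSpace ℝ (Fin n))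
          (cinf : EuclideanSpace ℝ (Fin n)) (s : ℕ → ℝ),
          (∀ k, 0 < m k) ∧ 0 < minf ∧ Tendsto m atTop (𝓝 minf) ∧
          Tendsto (fun k =>
              ‖((B k).toLinearIsometry.toContinuousLinearMap
                - Binf.toLinearIsometry.toContinuousLinearMap)‖) atTop (𝓝 0) ∧
          Tendsto c atTop (𝓝 cinf) ∧
          (∀ k, 0 < s k) ∧ Tendsto s atTop (𝓝 0) ∧
          (∀ k, ∀ x : EuclideanSpace ℝ (Fin n),
            m k • (B k (lam (φ k) • (A (φ k) x) + b (φ k))) + c k = s k • x))) := by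
  have hrank : 1 < Module.rank ℝ (EuclideanSpace ℝ (Fin n)) := by
    rw [← Module.finrank_eq_rank, finrank_euclideanSpace_fin]
    exact_mod_cast hn
  by_cases hM : Tendsto (fun k => max (lam k) ‖b k‖) atTop atTop
  · have hd : ∀ k, ∃ d : EuclideanSpace ℝ (Fin n), ‖d‖ = 1 ∧ b k = -(‖b k‖ • A k d) := by
      intro k
      by_cases hb : b k = 0
      · have : Nontrivial (EuclideanSpace ℝ (Fin n)) :=
          rank_pos_iff_nontrivial.mp (lt_trans zero_lt_one hrank)
        obtain ⟨d, hd⟩ := exists_norm_eq (EuclideanSpace ℝ (Fin n)) zero_le_one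
        exact ⟨d, hd, by simp [hb]⟩
      · have hb' : ‖b k‖ ≠ 0 := norm_ne_zero_iff.mpr hb
        refine ⟨-(‖b k‖⁻¹ • (A k).symm (b k)), ?_, ?_⟩
        · simp [norm_smul, hb']
        · simp [smul_smul, hb']
    choose d hd1 hd2 using hd
    obtain ⟨dinf, -, φ, hφ, hdl⟩ := tendsto_subseq_of_bounded
      (Metric.isBounded_closedBall (x := (0 : EuclideanSpace ℝ (Fin n))) (r := 1))
      (x := d) (fun k => by simp [hd1])
    refine ⟨φ, hφ, Or.inl ?_⟩
    intro r hr w hw ε hε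
    obtain ⟨w', hw', hww, hne⟩ := aux_near hrank w dinf hw ε hε
    have hδ : 0 < ‖w' - dinf‖ := norm_pos_iff.mpr (sub_ne_zero.mpr hne)
    set δ := ‖w' - dinf‖ with hδdef
    refine ⟨w', hw', min (ε / 2) (δ / 4), by positivity, ?_, ?_⟩
    · rintro v ⟨hv, hv2⟩
      refine ⟨hv, ?_⟩
      have := norm_sub_le_norm_sub_add_norm_sub v w' w
      have := min_le_left (ε / 2) (δ / 4)
      linarith
    · intro R hR
      have e1 : ∀ᶠ k in atTop, ‖d (φ k) - dinf‖ < δ / 4 := by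
        have := Metric.tendsto_nhds.mp hdl (δ / 4) (by positivity)
        simpa [dist_eq_norm] using this
      have e2 : ∀ᶠ k in atTop,
          R * (4 / δ) * (r + 1) + 1 ≤ max (lam (φ k)) ‖b (φ k)‖ :=
        (hM.comp hφ.tendsto_atTop).eventually_ge_atTop _
      obtain ⟨N, hN⟩ := eventually_atTop.mp (e1.and e2)
      refine ⟨N, fun k hk t ht v hv hvw => ?_⟩
      obtain ⟨f1, f2⟩ := hN k hk
      have g1 : δ / 2 ≤ ‖v - d (φ k)‖ := by
        have h1 := norm_sub_le_norm_sub_add_norm_sub w' v dinf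
        have h2 := norm_sub_le_norm_sub_add_norm_sub v (d (φ k)) dinf
        have h3 := min_le_right (ε / 2) (δ / 4)
        rw [norm_sub_rev w' v] at h1
        linarith
      have ht0 : 0 < t := lt_of_lt_of_le (by positivity) ht
      have hl := hlam (φ k)
      obtain ⟨k1, k2⟩ := aux_est v (d (φ k)) hv (hd1 _) (lam (φ k) * t) ‖b (φ k)‖ (δ / 2)
        (by positivity) (norm_nonneg _) g1
      have heq : ‖lam (φ k) • (A (φ k) (t • v)) + b (φ k)‖
          = ‖(lam (φ k) * t) • v - ‖b (φ k)‖ • d (φ k)‖ := by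
        rw [← (A (φ k)).norm_map ((lam (φ k) * t) • v - ‖b (φ k)‖ • d (φ k))]
        congr 1
        conv_lhs => rw [hd2 (φ k)]
        simp only [map_sub, map_smul, smul_smul]
        rw [← sub_eq_add_neg]
      rw [heq]
      set X := ‖(lam (φ k) * t) • v - ‖b (φ k)‖ • d (φ k)‖
      by_contra hX
      push Not at hX
      have q1 : ‖b (φ k)‖ ≤ R * (4 / δ) := by
        rw [mul_div_assoc', le_div_iff₀ hδ]; linarith
      have q2 : lam (φ k) * t ≤ R * (4 / δ) := by
        rw [mul_div_assoc', le_div_iff₀ hδ]; linarith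
      have q3 : lam (φ k) ≤ R * (4 / δ) * r := by
        have h1 : 1 ≤ t * r := by rwa [div_le_iff₀ hr] at ht
        have h2 := mul_le_mul_of_nonneg_right q2 hr.le
        have h3 := mul_le_mul_of_nonneg_left h1 hl.le
        linarith
      have q0 : 0 < R * (4 / δ) := by positivity
      have q4 : 0 < R * (4 / δ) * r := by positivity
      have : max (lam (φ k)) ‖b (φ k)‖ ≤ R * (4 / δ) * (r + 1) := by
        apply max_le <;> linarith
      linarith
  · rw [tendsto_atTop] at hM
    push Not at hM
    obtain ⟨C, hC⟩ := hM
    obtain ⟨φ₁, hφ₁, hC₁⟩ := extraction_of_frequently_atTop hC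
    obtain ⟨binf, -, φ₂, hφ₂, hb⟩ := tendsto_subseq_of_bounded
      (Metric.isBounded_closedBall (x := (0 : EuclideanSpace ℝ (Fin n))) (r := C))
      (x := fun k => b (φ₁ k)) (fun k => by
        simpa using ((le_max_right _ _).trans_lt (not_le.mp (by simpa using hC₁ k))).le)
    obtain ⟨Binf, φ₃, hφ₃, hB⟩ := aux_compact (fun k => (A (φ₁ (φ₂ k))).symm)
    have hφ : StrictMono (fun k => φ₁ (φ₂ (φ₃ k))) := hφ₁.comp (hφ₂.comp hφ₃)
    have hbl : Tendsto (fun k => b (φ₁ (φ₂ (φ₃ k)))) atTop (𝓝 binf) := hb.comp hφ₃.tendsto_atTop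
    refine ⟨fun k => φ₁ (φ₂ (φ₃ k)), hφ, Or.inr ⟨fun _ => 1,
      fun k => (A (φ₁ (φ₂ (φ₃ k)))).symm,
      fun k => -((A (φ₁ (φ₂ (φ₃ k)))).symm (b (φ₁ (φ₂ (φ₃ k))))), 1, Binf, -(Binf binf),
      fun k => lam (φ₁ (φ₂ (φ₃ k))), fun _ => one_pos, one_pos, tendsto_const_nhds,
      tendsto_iff_norm_sub_tendsto_zero.mp hB, ?_, fun k => hlam _, ?_, ?_⟩⟩
    · have h := (isBoundedBilinearMap_apply (𝕜 := ℝ) (E := EuclideanSpace ℝ (Fin n))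
        (F := EuclideanSpace ℝ (Fin n))).continuous.tendsto
          (Binf.toLinearIsometry.toContinuousLinearMap, binf)
      exact (h.comp (hB.prodMk_nhds hbl)).neg
    · have hinv : Tendsto (fun k => (lam (φ₁ (φ₂ (φ₃ k))))⁻¹) atTop atTop := by
        rw [tendsto_atTop]
        intro R
        filter_upwards [(hunbounded.comp hφ.tendsto_atTop).eventually_ge_atTop (max R C)] with k hk
        have h1 : max (lam (φ₁ (φ₂ (φ₃ k)))) ‖b (φ₁ (φ₂ (φ₃ k)))‖ < C := by
          simpa using hC₁ (φ₂ (φ₃ k))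
        simp only [Function.comp_apply] at hk
        have h2 := (le_max_right R C).trans hk
        have h3 := (le_max_left R C).trans hk
        obtain ⟨h4, h5⟩ := max_lt_iff.mp h1
        rcases le_max_iff.mp h3 with h | h
        · rcases le_max_iff.mp h with h | h
          · rcases le_max_iff.mp h2 with h' | h'
            · rcases le_max_iff.mp h' with h' | h'
              · linarith
              · linarith
            · linarith
          · exact h
        · rcases le_max_iff.mp h2 with h' | h'
          · rcases le_max_iff.mp h' with h' | h'
            · linarith
            · linarith
          · linarith
      have h := tendsto_inv_atTop_zero.comp hinv
      simpa [Function.comp_def] using h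
    · intro k x
      simp
end

section
/- Let n ≥ 2. Let (λ_k) and (μ_k) be sequences of positive reals with μ_k → ∞ and λ_k/μ_k → 0, and let (u_k) be a sequence of unit vectors of ℝⁿ converging to a unit vector u_∞. Let K be a closed subset of the unit sphere Sⁿ⁻¹ with −u_∞ ∉ K, and let r > 0. Then for every R > 0 there exists N such that for all k ≥ N, all v ∈ K and all t ≥ 1/r one has ‖λ_k t • v + μ_k • u_k‖ > R; that is, the images of the truncated cone {t·v : t ≥ 1/r, v ∈ K} under the maps x ↦ λ_k • x + μ_k • u_k leave every compact subset of ℝⁿ. -/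
open Filter Topology

/-- images of truncated cones under `x ↦ λ_k • x + μ_k • u_k` leave
every compact subset of ℝⁿ, when `μ_k → ∞` and `λ_k/μ_k → 0`. -/
theorem cone_escape_of_ratio_to_zero
    (n : ℕ) (hn : 2 ≤ n)
    (lam mu : ℕ → ℝ) (hlam : ∀ k, 0 < lam k) (hmu : ∀ k, 0 < mu k)
    (hmu_top : Tendsto mu atTop atTop)
    (hratio : Tendsto (fun k => lam k / mu k) atTop (𝓝 0))
    (u : ℕ → EuclideanSpace ℝ (Fin n)) (hu : ∀ k, ‖u k‖ = 1)
    (uinf : EuclideanSpace ℝ (Fin n)) (huinf : ‖uinf‖ = 1)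
    (hu_lim : Tendsto u atTop (𝓝 uinf))
    (K : Set (EuclideanSpace ℝ (Fin n)))
    (hK_sub : K ⊆ Metric.sphere (0 : EuclideanSpace ℝ (Fin n)) 1)
    (hK_closed : IsClosed K)
    (hK_not : -uinf ∉ K)
    (r : ℝ) (hr : 0 < r) :
    ∀ R > 0, ∃ N : ℕ, ∀ k ≥ N, ∀ v ∈ K, ∀ t : ℝ, 1 / r ≤ t →
      ‖(lam k * t) • v + mu k • u k‖ > R := by
  intro R hR
  obtain ⟨δ, hδ, hball⟩ := Metric.isOpen_iff.1 hK_closed.isOpen_compl (-uinf) hK_not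
  have h1 : ∀ᶠ k in atTop, dist (u k) uinf < δ / 2 :=
    (Metric.tendsto_nhds.1 hu_lim) (δ / 2) (by positivity)
  have h2 : ∀ᶠ k in atTop, 4 * R / δ < mu k := hmu_top.eventually_gt_atTop _
  obtain ⟨N, hN⟩ := eventually_atTop.1 (h1.and h2)
  refine ⟨N, fun k hk v hv t ht => ?_⟩
  obtain ⟨ha, hb⟩ := hN k hk
  have hv1 : ‖v‖ = 1 := by simpa using hK_sub hv
  have hvd : δ ≤ ‖v + uinf‖ := by
    by_contra hlt
    push Not at hlt
    refine hball (a := v) ?_ hv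
    rw [Metric.mem_ball, dist_eq_norm, sub_neg_eq_add]
    exact hlt
  have ht0 : 0 ≤ t := le_trans (by positivity) ht
  have hs : 0 ≤ lam k * t := mul_nonneg (hlam k).le ht0
  generalize lam k * t = s at hs
  have hm := hmu k
  rw [dist_eq_norm] at ha
  have e1 : ‖v + uinf‖ ≤ ‖v + u k‖ + ‖u k - uinf‖ := by
    have := norm_sub_le (v + u k) (u k - uinf)
    rwa [show v + u k - (u k - uinf) = v + uinf by abel] at this
  have e2 : mu k * ‖v + u k‖ ≤ ‖s • v + mu k • u k‖ + |s - mu k| := by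
    have := norm_sub_le (s • v + mu k • u k) ((s - mu k) • v)
    rw [show s • v + mu k • u k - (s - mu k) • v = mu k • (v + u k) by module,
      norm_smul, norm_smul, hv1, Real.norm_of_nonneg hm.le, mul_one, Real.norm_eq_abs] at this
    exact this
  have e3 : |s - mu k| ≤ ‖s • v + mu k • u k‖ := by
    have := abs_norm_sub_norm_le (s • v) (-(mu k • u k))
    rw [norm_neg, norm_smul, norm_smul, hv1, hu k, Real.norm_of_nonneg hm.le,
      Real.norm_of_nonneg hs, mul_one, mul_one, sub_neg_eq_add] at this
    exact this
  have e4 : mu k * (δ / 2) ≤ mu k * ‖v + u k‖ :=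
    mul_le_mul_of_nonneg_left (by linarith) hm.le
  rw [div_lt_iff₀ hδ] at hb
  show R < _
  linarith
end

section
/- Let n ≥ 2, let K be a closed subset of the unit sphere Sⁿ⁻¹ of ℝⁿ with K ∩ (−K) = ∅, let u_∞ be a unit vector with u_∞ ∉ K and −u_∞ ∉ K, and let b_∞ > 0. Then there exist α₀ > 0, δ > 0 and β > 0 such that for all α > α₀, all b ∈ ℝ with |b − b_∞| ≤ δ, all u ∈ ℝⁿ with ‖u − u_∞‖ ≤ δ, and all x, v ∈ K, one has b·α • x + u ≠ 0 and ‖(b·α • x + u)/‖b·α • x + u‖ + v‖ ≥ β. -/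
open Filter Topology

/-- uniform separation of normalized vectors `(bα • x + u)/‖bα • x + u‖`
from `-K`, for `x ∈ K`, `α` large, and `(b, u)` close to `(b_∞, u_∞)`. -/
theorem uniform_separation_from_neg_cap
    (n : ℕ) (hn : 2 ≤ n)
    (K : Set (EuclideanSpace ℝ (Fin n)))
    (hK_sub : K ⊆ Metric.sphere (0 : EuclideanSpace ℝ (Fin n)) 1)
    (hK_closed : IsClosed K)
    (hK_disj : K ∩ (-K) = ∅)
    (uinf : EuclideanSpace ℝ (Fin n)) (huinf : ‖uinf‖ = 1)
    (hK_not : uinf ∉ K) (hK_not' : -uinf ∉ K)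
    (binf : ℝ) (hbinf : 0 < binf) :
    ∃ α₀ > (0 : ℝ), ∃ δ > (0 : ℝ), ∃ β > (0 : ℝ),
      ∀ α : ℝ, α₀ < α → ∀ b : ℝ, |b - binf| ≤ δ →
      ∀ u : EuclideanSpace ℝ (Fin n), ‖u - uinf‖ ≤ δ →
      ∀ x ∈ K, ∀ v ∈ K,
        (b * α) • x + u ≠ 0 ∧
        ‖‖(b * α) • x + u‖⁻¹ • ((b * α) • x + u) + v‖ ≥ β := by
  have hKc : IsCompact K := (isCompact_sphere _ _).of_isClosed_subset hK_closed hK_sub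
  have hdis : Disjoint K (-K) := Set.disjoint_iff_inter_eq_empty.mpr hK_disj
  obtain ⟨c, hc, hsep⟩ := Metric.exists_pos_forall_lt_edist hKc hK_closed.neg hdis
  have hc' : (0 : ℝ) < c := hc
  have hsep' : ∀ x ∈ K, ∀ v ∈ K, (c : ℝ) < ‖x + v‖ := by
    intro x hx v hv
    have h := hsep x hx (-v) (by simpa using hv)
    rw [edist_nndist, ENNReal.coe_lt_coe, ← NNReal.coe_lt_coe, coe_nndist, dist_eq_norm,
      sub_neg_eq_add] at h
    exact h
  refine ⟨(2 + 8 / c) * 2 / binf, by positivity, min 1 (binf / 2), by positivity, c / 2,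
    by positivity, ?_⟩
  intro α hα b hb u hu x hx v hv
  have hx1 : ‖x‖ = 1 := by simpa using hK_sub hx
  have hu2 : ‖u‖ ≤ 2 := by
    have h1 : ‖u - uinf‖ ≤ 1 := hu.trans (min_le_left _ _)
    have h2 := norm_add_le (u - uinf) uinf
    rw [sub_add_cancel] at h2
    linarith
  have hb2 : binf / 2 ≤ b := by
    have h1 := (abs_le.mp (hb.trans (min_le_right _ _))).1
    linarith
  have hα0 : 0 < α := lt_trans (by positivity) hα
  have ht : 2 + 8 / (c : ℝ) < b * α := by
    rw [div_lt_iff₀ hbinf] at hα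
    nlinarith [mul_le_mul_of_nonneg_right hb2 hα0.le]
  generalize b * α = t at *
  have h8 : 0 < 8 / (c : ℝ) := by positivity
  have ht0 : 0 < t := by linarith
  have htx : ‖t • x‖ = t := by rw [norm_smul, hx1, mul_one, Real.norm_of_nonneg ht0.le]
  have habs : |‖t • x + u‖ - t| ≤ 2 := by
    have h := abs_norm_sub_norm_le (t • x + u) (t • x)
    rw [htx, add_sub_cancel_left] at h
    linarith
  generalize hy : t • x + u = y at *
  have hyl : 8 / (c : ℝ) < ‖y‖ := by
    have := (abs_le.mp habs).1
    linarith
  have hy0 : 0 < ‖y‖ := h8.trans hyl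
  refine ⟨norm_pos_iff.mp hy0, ?_⟩
  have hd : ‖y - ‖y‖ • x‖ ≤ 4 := by
    have e : y - ‖y‖ • x = u - (‖y‖ - t) • x := by
      rw [sub_smul, ← hy]; abel
    rw [e]
    have h := norm_sub_le u ((‖y‖ - t) • x)
    rw [norm_smul, hx1, mul_one, Real.norm_eq_abs] at h
    linarith
  have hd2 : ‖‖y‖⁻¹ • y - x‖ ≤ c / 2 := by
    have e : ‖y‖⁻¹ • y - x = ‖y‖⁻¹ • (y - ‖y‖ • x) := by
      rw [smul_sub, smul_smul, inv_mul_cancel₀ hy0.ne', one_smul]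
    rw [e, norm_smul, norm_inv, norm_norm, inv_mul_le_iff₀ hy0]
    rw [div_lt_iff₀ hc'] at hyl
    linarith
  have h1 := hsep' x hx v hv
  have h2 := norm_sub_le (‖y‖⁻¹ • y + v) (‖y‖⁻¹ • y - x)
  have e : (‖y‖⁻¹ • y + v) - (‖y‖⁻¹ • y - x) = x + v := by abel
  rw [e] at h2
  linarith
end

section
/- Let n ≥ 2, let E be a closed subset of ℝⁿ with μH[n−1](E) = 0, and let λ > 0. Then the set 𝒰 = {w ∈ Sⁿ⁻¹ : t • w ∉ E for all t ∈ (0, λ]} is a dense G_δ subset of the unit sphere Sⁿ⁻¹: it contains a countable intersection of subsets that are open and dense in Sⁿ⁻¹ (in particular it is dense in Sⁿ⁻¹, and it is a G_δ set of Sⁿ⁻¹). -/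
open Filter Topology MeasureTheory
open scoped MeasureTheory

lemma aux_lip {F : Type*} [NormedAddCommGroup F] [NormedSpace ℝ F] (a : ℝ) (ha : 0 < a) :
    LipschitzOnWith (2 / a).toNNReal (fun x : F => ‖x‖⁻¹ • x) {x | a ≤ ‖x‖} := by
  apply LipschitzOnWith.of_dist_le_mul
  intro x hx y hy
  simp only [Set.mem_ofPred_eq] at hx hy
  have hx0 : 0 < ‖x‖ := ha.trans_le hx
  have hy0 : 0 < ‖y‖ := ha.trans_le hy
  rw [Real.coe_toNNReal _ (by positivity), dist_eq_norm, dist_eq_norm]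
  have e : ‖x‖⁻¹ • x - ‖y‖⁻¹ • y = ‖x‖⁻¹ • (x - y) + (‖x‖⁻¹ - ‖y‖⁻¹) • y := by
    module
  have h1 : ‖‖x‖⁻¹ • (x - y)‖ = ‖x - y‖ / ‖x‖ := by
    rw [norm_smul, norm_inv, norm_norm]; field_simp
  have h2 : ‖(‖x‖⁻¹ - ‖y‖⁻¹) • y‖ ≤ ‖x - y‖ / ‖x‖ := by
    have : (‖x‖⁻¹ - ‖y‖⁻¹) = (‖y‖ - ‖x‖) / (‖x‖ * ‖y‖) := by field_simp
    rw [norm_smul, this, norm_div, norm_mul, norm_norm, norm_norm]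
    have h3 : ‖‖y‖ - ‖x‖‖ ≤ ‖x - y‖ := by
      rw [norm_sub_rev x y]; exact abs_norm_sub_norm_le y x
    calc ‖‖y‖ - ‖x‖‖ / (‖x‖ * ‖y‖) * ‖y‖ = ‖‖y‖ - ‖x‖‖ / ‖x‖ := by field_simp
      _ ≤ _ := by gcongr
  have h4 : ‖x - y‖ / ‖x‖ ≤ ‖x - y‖ / a := by gcongr
  calc _ ≤ ‖x - y‖ / a + ‖x - y‖ / a := by
        rw [e]; exact (norm_add_le _ _).trans (by linarith)
    _ = _ := by ring

lemma aux_pos (n : ℕ) (hn : 2 ≤ n)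
    (V : Set (Metric.sphere (0 : EuclideanSpace ℝ (Fin n)) 1)) (hV : IsOpen V) (hne : V.Nonempty) :
    μH[(n : ℝ) - 1] ((↑) '' V : Set (EuclideanSpace ℝ (Fin n))) ≠ 0 := by
  intro h0
  obtain ⟨w, hw⟩ := hne
  obtain ⟨O, hO, rfl⟩ := isOpen_induced_iff.1 hV
  have hwn : ‖(w : EuclideanSpace ℝ (Fin n))‖ = 1 := by simpa using w.2
  set w' : EuclideanSpace ℝ (Fin n) := w.1 with hw'
  let W := (Submodule.span ℝ {w'})ᗮ
  have hw0 : w' ≠ 0 := by intro h; simp [h] at hwn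
  have hfr : Module.finrank ℝ W = n - 1 := by
    have h1 := Submodule.finrank_add_finrank_orthogonal (Submodule.span ℝ {w'})
    rw [finrank_span_singleton hw0, finrank_euclideanSpace_fin] at h1
    change 1 + Module.finrank ℝ W = n at h1
    omega
  let e : W ≃L[ℝ] (Fin (n-1) → ℝ) := ContinuousLinearEquiv.ofFinrankEq (by simp [hfr])
  let L : EuclideanSpace ℝ (Fin n) →L[ℝ] (Fin (n-1) → ℝ) :=
    e.toContinuousLinearMap.comp W.orthogonalProjectionOnto
  have hn1 : ((n : ℝ) - 1) = ((Fintype.card (Fin (n-1)) : ℕ) : ℝ) := by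
    rw [Fintype.card_fin, Nat.cast_sub (by omega)]; simp
  have hL : μH[(n : ℝ) - 1] (L '' ((↑) '' ((↑) ⁻¹' O : Set (Metric.sphere (0 : EuclideanSpace ℝ (Fin n)) 1)))) = 0 := by
    have := L.lipschitz.hausdorffMeasure_image_le (d := (n : ℝ) - 1) (by
      rw [hn1]; positivity) ((↑) '' ((↑) ⁻¹' O : Set (Metric.sphere (0 : EuclideanSpace ℝ (Fin n)) 1)))
    rw [h0, mul_zero] at this
    exact le_antisymm this bot_le
  rw [hn1, hausdorffMeasure_pi_real] at hL
  let g : (Fin (n-1) → ℝ) → EuclideanSpace ℝ (Fin n) := fun y =>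
    (e.symm y : EuclideanSpace ℝ (Fin n)) + Real.sqrt (1 - ‖e.symm y‖^2) • w'
  have hg : Continuous g := by fun_prop
  have hg0 : g 0 = w' := by simp [g]
  have hnb : ∀ᶠ y in 𝓝 (0 : Fin (n-1) → ℝ), g y ∈ O ∧ ‖e.symm y‖ < 1 := by
    refine (hg.continuousAt.eventually_mem (hO.mem_nhds ?_)).and ?_
    · rw [hg0]; exact hw
    · have : Continuous fun y => ‖e.symm y‖ := by fun_prop
      exact this.continuousAt.eventually_lt continuousAt_const (by simp)
  refine (Measure.measure_pos_of_mem_nhds volume (x := (0 : Fin (n-1) → ℝ)) ?_).ne' hL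
  filter_upwards [hnb] with y ⟨hy1, hy2⟩
  have hin : inner ℝ (e.symm y : EuclideanSpace ℝ (Fin n)) w' = 0 := by
    have := (e.symm y).2
    rw [Submodule.mem_orthogonal_singleton_iff_inner_left] at this
    exact this
  have hs : 0 ≤ 1 - ‖e.symm y‖^2 := by nlinarith [norm_nonneg (e.symm y)]
  have hnorm : ‖g y‖ = 1 := by
    have : ‖g y‖ * ‖g y‖ = 1 := by
      rw [norm_add_sq_eq_norm_sq_add_norm_sq_real (by rw [inner_smul_right, hin, mul_zero]),
        norm_smul, hwn, mul_one, Real.norm_eq_abs, abs_mul_abs_self, Real.mul_self_sqrt hs,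
        Submodule.coe_norm]
      ring
    nlinarith [norm_nonneg (g y)]
  refine ⟨g y, ⟨⟨g y, by simpa using hnorm⟩, hy1, rfl⟩, ?_⟩
  have hwp : W.orthogonalProjectionOnto w' = 0 := by
    rw [Submodule.orthogonalProjectionOnto_eq_zero_iff]
    exact Submodule.le_orthogonal_orthogonal _ (Submodule.mem_span_singleton_self w')
  simp [L, g, hwp]

theorem directions_avoiding_thin_set_dense_Gdelta
    (n : ℕ) (hn : 2 ≤ n)
    (E : Set (EuclideanSpace ℝ (Fin n)))
    (hE_closed : IsClosed E)
    (hE_null : μH[(n : ℝ) - 1] E = 0)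
    (lam : ℝ) (hlam : 0 < lam) :
    let S := Metric.sphere (0 : EuclideanSpace ℝ (Fin n)) 1
    let 𝒰 : Set S := {w : S | ∀ t : ℝ, 0 < t → t ≤ lam → t • (w : EuclideanSpace ℝ (Fin n)) ∉ E}
    (∃ s : ℕ → Set S, (∀ m, IsOpen (s m) ∧ Dense (s m)) ∧ (⋂ m, s m) ⊆ 𝒰) ∧
      Dense 𝒰 ∧ IsGδ 𝒰 := by
  intro S 𝒰
  let s : ℕ → Set S := fun m =>
    {w | ∀ t ∈ Set.Icc (lam / (m + 1)) lam, t • (w : EuclideanSpace ℝ (Fin n)) ∉ E}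
  have hU : 𝒰 = ⋂ m, s m := by
    ext w
    simp only [Set.mem_iInter]
    constructor
    · intro h m t ht
      exact h t (lt_of_lt_of_le (by positivity) ht.1) ht.2
    · intro h t ht0 htl
      obtain ⟨m, hm⟩ := exists_nat_gt (lam / t)
      refine h m t ⟨?_, htl⟩
      rw [div_lt_iff₀ ht0] at hm
      rw [div_le_iff₀ (by positivity)]
      nlinarith
  have hopen : ∀ m, IsOpen (s m) := by
    intro m
    rw [isOpen_iff_eventually]
    intro w hw
    refine isCompact_Icc.eventually_forall_of_forall_eventually ?_
    intro t ht
    have hc : Continuous fun p : S × ℝ => p.2 • (p.1 : EuclideanSpace ℝ (Fin n)) := by fun_prop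
    exact (hc.continuousAt (x := (w, t))).eventually_mem (hE_closed.isOpen_compl.mem_nhds (hw t ht))
  have hdense : ∀ m, Dense (s m) := by
    intro m
    rw [dense_iff_inter_open]
    intro V hV hne
    by_contra hcon
    rw [Set.not_nonempty_iff_eq_empty] at hcon
    refine aux_pos n hn V hV hne ?_
    have ha : 0 < lam / ((m : ℝ) + 1) := by positivity
    have hl := (aux_lip (F := EuclideanSpace ℝ (Fin n)) _ ha).mono
      (Set.inter_subset_right (s := E))
    have hn0 : (0 : ℝ) ≤ (n : ℝ) - 1 := by
      have : (2 : ℝ) ≤ n := by exact_mod_cast hn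
      linarith
    have h1 := hl.hausdorffMeasure_image_le hn0
    rw [measure_mono_null Set.inter_subset_left hE_null, mul_zero] at h1
    refine measure_mono_null ?_ (le_antisymm h1 bot_le)
    rintro _ ⟨w, hw, rfl⟩
    have hws : w ∉ s m := fun h => by
      have : w ∈ V ∩ s m := ⟨hw, h⟩
      rw [hcon] at this; exact this
    have hws' : ∃ t ∈ Set.Icc (lam / ((m : ℝ) + 1)) lam,
        t • (w : EuclideanSpace ℝ (Fin n)) ∈ E := by
      by_contra hno
      exact hws fun t ht htE => hno ⟨t, ht, htE⟩
    obtain ⟨t, ht, htE⟩ := hws'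
    have ht0 : 0 < t := ha.trans_le ht.1
    have hwn : ‖(w : EuclideanSpace ℝ (Fin n))‖ = 1 := by simpa using w.2
    have hnt : ‖t • (w : EuclideanSpace ℝ (Fin n))‖ = t := by
      rw [norm_smul, hwn, mul_one, Real.norm_of_nonneg ht0.le]
    refine ⟨t • (w : EuclideanSpace ℝ (Fin n)), ⟨htE, ?_⟩, ?_⟩
    · rw [Set.mem_ofPred_eq, hnt]; exact ht.1
    · simp only [hnt]
      rw [smul_smul, inv_mul_cancel₀ ht0.ne', one_smul]
  refine ⟨⟨s, fun m => ⟨hopen m, hdense m⟩, hU.ge⟩, ?_, ?_⟩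
  · rw [hU]; exact dense_iInter_of_isOpen hopen hdense
  · rw [hU]; exact .iInter_of_isOpen hopen
end

section
/- Let n ≥ 2, let U be a nonempty connected open subset of ℝⁿ, and let E ⊆ U be relatively closed in U with μH[n−1](E) = 0. Then U ∖ E is dense in U and connected. -/
open Filter Topology MeasureTheory
open scoped MeasureTheory

lemma aux_exists_shift (n : ℕ) (hn : 2 ≤ n) (E : Set (EuclideanSpace ℝ (Fin n)))
    (hE : μH[(n : ℝ) - 1] E = 0) (x v : EuclideanSpace ℝ (Fin n)) (hv : v ≠ 0)
    (δ : ℝ) (hδ : 0 < δ) :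
    ∃ w : EuclideanSpace ℝ (Fin n), ‖w‖ < δ ∧ ∀ t : ℝ, x + w + t • v ∉ E := by
  let K : Submodule ℝ (EuclideanSpace ℝ (Fin n)) := (Submodule.span ℝ {v})ᗮ
  have hfin : Module.finrank ℝ K + 1 = n := by
    have h := Submodule.finrank_add_finrank_orthogonal (Submodule.span ℝ {v})
    rw [finrank_span_singleton hv, finrank_euclideanSpace_fin] at h
    change 1 + Module.finrank ℝ K = n at h
    omega
  have hfin' : (n : ℝ) - 1 = Module.finrank ℝ K := by
    have h : (Module.finrank ℝ K : ℝ) + 1 = n := by exact_mod_cast hfin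
    linarith
  let P := K.orthogonalProjectionOnto
  have hP0 : μH[(Module.finrank ℝ K : ℝ)] (P '' E) = 0 := by
    rw [hfin'] at hE
    refine le_antisymm ?_ zero_le
    refine le_trans (P.lipschitz.hausdorffMeasure_image_le (Nat.cast_nonneg _) E) ?_
    rw [hE, mul_zero]
  have hpos : 0 < μH[(Module.finrank ℝ K : ℝ)] (Metric.ball (P x) δ) :=
    Metric.measure_ball_pos _ _ hδ
  have : ∃ k ∈ Metric.ball (P x) δ, k ∉ P '' E := by
    by_contra! h
    exact absurd (measure_mono_null h hP0) hpos.ne'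
  obtain ⟨k, hk, hkE⟩ := this
  refine ⟨((k - P x : K) : EuclideanSpace ℝ (Fin n)), ?_, ?_⟩
  · rw [mem_ball_iff_norm] at hk
    simpa using hk
  · intro t ht
    apply hkE
    refine ⟨_, ht, ?_⟩
    have hPv : P v = 0 := by
      exact Submodule.orthogonalProjectionOnto_orthogonalComplement_singleton_eq_zero v
    have hPk : P ((k - P x : K) : EuclideanSpace ℝ (Fin n)) = k - P x :=
      Submodule.orthogonalProjectionOnto_mem_subspace_eq_self _
    rw [map_add, map_add, map_smul, hPv, hPk]
    simp

lemma aux_ball (n : ℕ) (hn : 2 ≤ n) (E : Set (EuclideanSpace ℝ (Fin n)))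
    (hE : μH[(n : ℝ) - 1] E = 0) (B : Set (EuclideanSpace ℝ (Fin n)))
    (hB : Convex ℝ B) (hBE : IsOpen (B \ E)) : IsPreconnected (B \ E) := by
  apply isPreconnected_of_forall_pair
  intro x hx y hy
  by_cases hxy : x = y
  · subst hxy
    exact ⟨{x}, by simpa using hx, by simp, by simp, isPreconnected_singleton⟩
  obtain ⟨r, hr, hxr⟩ := Metric.isOpen_iff.1 hBE x hx
  obtain ⟨s, hs, hys⟩ := Metric.isOpen_iff.1 hBE y hy
  obtain ⟨w, hw, hwE⟩ := aux_exists_shift n hn E hE x (y - x) (sub_ne_zero.2 (Ne.symm hxy))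
    (min r s) (lt_min hr hs)
  have hxw : x + w ∈ Metric.ball x r := by
    simpa using hw.trans_le (min_le_left _ _)
  have hyw : y + w ∈ Metric.ball y s := by
    simpa using hw.trans_le (min_le_right _ _)
  have hseg : segment ℝ (x + w) (y + w) ⊆ B \ E := by
    intro z hz
    refine ⟨hB.segment_subset (hxr hxw).1 (hys hyw).1 hz, ?_⟩
    rw [segment_eq_image'] at hz
    obtain ⟨t, -, rfl⟩ := hz
    have := hwE t
    simpa using this
  refine ⟨Metric.ball x r ∪ segment ℝ (x + w) (y + w) ∪ Metric.ball y s, ?_, ?_, ?_, ?_⟩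
  · exact Set.union_subset (Set.union_subset hxr hseg) hys
  · exact Or.inl (Or.inl (Metric.mem_ball_self hr))
  · exact Or.inr (Metric.mem_ball_self hs)
  · refine IsPreconnected.union (y + w) (Or.inr (right_mem_segment ℝ _ _)) hyw ?_
      (convex_ball y s).isPreconnected
    exact IsPreconnected.union (x + w) hxw (left_mem_segment ℝ _ _)
      (convex_ball x r).isPreconnected (convex_segment _ _).isPreconnected

/-- removing a relatively closed set of `(n-1)`-dimensional Hausdorff
measure zero from a nonempty connected open subset of ℝⁿ leaves a dense connected set. -/
theorem complement_of_thin_set_dense_connected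
    (n : ℕ) (hn : 2 ≤ n)
    (U : Set (EuclideanSpace ℝ (Fin n)))
    (hU_ne : U.Nonempty) (hU_open : IsOpen U) (hU_conn : IsConnected U)
    (E : Set (EuclideanSpace ℝ (Fin n)))
    (hE_sub : E ⊆ U)
    (hE_closed : ∃ C : Set (EuclideanSpace ℝ (Fin n)), IsClosed C ∧ E = C ∩ U)
    (hE_null : μH[(n : ℝ) - 1] E = 0) :
    U ⊆ closure (U \ E) ∧ IsConnected (U \ E) := by
  have hdense : Dense Eᶜ := by
    apply dense_compl_of_dimH_lt_finrank
    have h1 : ((n - 1 : ℕ) : ℝ) = (n : ℝ) - 1 := by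
      rw [Nat.cast_sub (by omega)]; simp
    have : dimH E ≤ ((n - 1 : ℕ) : NNReal) := by
      apply dimH_le_of_hausdorffMeasure_ne_top
      rw [NNReal.coe_natCast, h1, hE_null]
      simp
    refine this.trans_lt ?_
    rw [finrank_euclideanSpace_fin]
    have : n - 1 < n := by omega
    exact_mod_cast this
  have hcl : U ⊆ closure (U \ E) := hdense.open_subset_closure_inter hU_open
  refine ⟨hcl, ?_, ?_⟩
  · exact closure_nonempty_iff.1 (hU_ne.mono hcl)
  obtain ⟨C, hC, hEC⟩ := hE_closed
  have key : ∀ x ∈ U, ∃ r > 0, Metric.ball x r ⊆ U ∧ IsPreconnected (Metric.ball x r \ E) := by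
    intro x hx
    obtain ⟨r, hr, hxr⟩ := Metric.isOpen_iff.1 hU_open x hx
    refine ⟨r, hr, hxr, aux_ball n hn E hE_null _ (convex_ball x r) ?_⟩
    have : Metric.ball x r \ E = Metric.ball x r \ C := by
      ext z
      simp only [hEC, Set.mem_sdiff, Set.mem_inter_iff]
      constructor
      · rintro ⟨h1, h2⟩
        exact ⟨h1, fun h => h2 ⟨h, hxr h1⟩⟩
      · rintro ⟨h1, h2⟩
        exact ⟨h1, fun h => h2 h.1⟩
    rw [this]
    exact Metric.isOpen_ball.sdiff hC
  intro u v hu hv huv hnu hnv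
  by_contra hne
  have hcov : U ⊆ interior (u ∪ E) ∪ interior (v ∪ E) := by
    intro x hx
    obtain ⟨r, hr, hxr, hpre⟩ := key x hx
    have hsub : Metric.ball x r \ E ⊆ U \ E := Set.sdiff_subset_sdiff_left hxr
    have hd : (Metric.ball x r \ E) ∩ (u ∩ v) = ∅ := by
      rw [← Set.not_nonempty_iff_eq_empty]
      exact fun h => hne (h.mono (Set.inter_subset_inter_left _ hsub))
    rcases isPreconnected_iff_subset_of_disjoint.1 hpre u v hu hv (hsub.trans huv) hd with h | h
    · left
      rw [mem_interior]
      refine ⟨_, ?_, Metric.isOpen_ball, Metric.mem_ball_self hr⟩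
      rw [Set.union_comm]; exact Set.sdiff_subset_iff.1 h
    · right
      rw [mem_interior]
      refine ⟨_, ?_, Metric.isOpen_ball, Metric.mem_ball_self hr⟩
      rw [Set.union_comm]; exact Set.sdiff_subset_iff.1 h
  have h1 : (U ∩ interior (u ∪ E)).Nonempty := by
    obtain ⟨x, hx, hxu⟩ := hnu
    exact ⟨x, hx.1, interior_mono Set.subset_union_left (hu.interior_eq.symm ▸ hxu)⟩
  have h2 : (U ∩ interior (v ∪ E)).Nonempty := by
    obtain ⟨x, hx, hxu⟩ := hnv
    exact ⟨x, hx.1, interior_mono Set.subset_union_left (hv.interior_eq.symm ▸ hxu)⟩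
  have h3 := hU_conn.isPreconnected _ _ isOpen_interior isOpen_interior hcov h1 h2
  obtain ⟨z, ⟨hzU, hzu, hzv⟩, hzE⟩ := hdense.inter_open_nonempty _
    (hU_open.inter (isOpen_interior.inter isOpen_interior)) h3
  exact hne ⟨z, ⟨hzU, hzE⟩, (interior_subset hzu).resolve_right hzE,
    (interior_subset hzv).resolve_right hzE⟩
end

section
/- Let n ≥ 3, let U be a nonempty open subset of ℝⁿ which is simply connected as a topological subspace, and let E ⊆ U be relatively closed in U with μH[n−2](E) = 0. Then the subspace U ∖ E is simply connected. -/
open Filter Topology MeasureTheory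
open scoped MeasureTheory

lemma cod2_grid (N : ℕ) (hN : 0 < N) (t : unitInterval) :
    ∃ i : Fin (N + 1), ∃ h : ((i : ℕ) : ℝ) / N ∈ unitInterval,
      dist t (⟨((i : ℕ) : ℝ) / N, h⟩ : unitInterval) ≤ 1 / N := by
  have hN' : (0 : ℝ) < N := by exact_mod_cast hN
  have h0 : (0 : ℝ) ≤ t * N := mul_nonneg t.2.1 hN'.le
  have hfl : (⌊(t : ℝ) * N⌋₊ : ℝ) ≤ t * N := Nat.floor_le h0
  have hlt : (t : ℝ) * N < ⌊(t : ℝ) * N⌋₊ + 1 := Nat.lt_floor_add_one _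
  have h1 : (t : ℝ) * N ≤ N := by nlinarith [t.2.2]
  have hle : ⌊(t : ℝ) * N⌋₊ ≤ N := by
    have : (⌊(t : ℝ) * N⌋₊ : ℝ) ≤ N := hfl.trans h1
    exact_mod_cast this
  refine ⟨⟨⌊(t : ℝ) * N⌋₊, by omega⟩, ⟨by positivity, ?_⟩, ?_⟩
  · rw [div_le_one hN']; exact hfl.trans h1
  · rw [Subtype.dist_eq, Real.dist_eq]
    have e : (t : ℝ) = (t * N) / N := by field_simp
    simp only
    rw [e, ← sub_div, mul_div_cancel_right₀ _ hN'.ne', abs_div, abs_of_pos hN']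
    gcongr
    rw [abs_le]; constructor <;> linarith

lemma cod2_bound (m : ℕ) (g : unitInterval × unitInterval → EuclideanSpace ℝ (Fin (m + 2)))
    (L : NNReal) (hg : LipschitzWith L g) :
    ∃ C : ℝ, 0 < C ∧ ∀ (x : EuclideanSpace ℝ (Fin (m + 2))) (r : ℝ), 0 < r → r ≤ 1 →
      volume {v | ∃ p, g p + v ∈ Metric.closedBall x r} ≤ ENNReal.ofReal (C * r ^ m) := by
  set V : ℝ := (volume (Metric.ball (0 : EuclideanSpace ℝ (Fin (m + 2))) 1)).toReal with hV
  have hVtop : volume (Metric.ball (0 : EuclideanSpace ℝ (Fin (m + 2))) 1) ≠ ⊤ :=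
    measure_ball_lt_top.ne
  have hVpos : 0 < V := ENNReal.toReal_pos (Metric.measure_ball_pos _ _ one_pos).ne' hVtop
  refine ⟨9 * (1 + L) ^ (m + 2) * V, by positivity, fun x r hr hr1 => ?_⟩
  set N : ℕ := ⌈1 / r⌉₊ with hN
  have hNpos : 0 < N := Nat.ceil_pos.2 (by positivity)
  have hN' : (0 : ℝ) < N := by exact_mod_cast hNpos
  have hNr : 1 / (N : ℝ) ≤ r := by
    rw [div_le_iff₀ hN']
    have := Nat.le_ceil (1 / r)
    rw [div_le_iff₀ hr] at this
    linarith
  have hNle : (N : ℝ) + 1 ≤ 3 / r := by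
    have h1 := (Nat.ceil_lt_add_one (a := 1 / r) (by positivity)).le
    have h2 : 1 ≤ 1 / r := by rw [le_div_iff₀ hr]; linarith
    have h3 : 3 / r = 1 / r + 1 / r + 1 / r := by ring
    linarith
  have hmem : ∀ i : Fin (N + 1), ((i : ℕ) : ℝ) / N ∈ unitInterval := fun i =>
    ⟨by positivity, by rw [div_le_one hN']; exact_mod_cast Nat.lt_succ_iff.1 i.2⟩
  let q : Fin (N + 1) × Fin (N + 1) → unitInterval × unitInterval :=
    fun ij => (⟨_, hmem ij.1⟩, ⟨_, hmem ij.2⟩)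
  have hsub : {v | ∃ p, g p + v ∈ Metric.closedBall x r} ⊆
      ⋃ ij, Metric.closedBall (x - g (q ij)) ((1 + L) * r) := by
    rintro v ⟨p, hp⟩
    obtain ⟨i, _, hi⟩ := cod2_grid N hNpos p.1
    obtain ⟨j, _, hj⟩ := cod2_grid N hNpos p.2
    refine Set.mem_iUnion.2 ⟨(i, j), ?_⟩
    have hd : dist p (q (i, j)) ≤ r := by
      rw [Prod.dist_eq]; exact max_le (hi.trans hNr) (hj.trans hNr)
    have h1 : dist (g p) (g (q (i, j))) ≤ L * r :=
      (hg.dist_le_mul _ _).trans (by gcongr)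
    rw [Metric.mem_closedBall, dist_eq_norm] at hp ⊢
    rw [dist_eq_norm] at h1
    have : v - (x - g (q (i, j))) = (g p + v - x) - (g p - g (q (i, j))) := by abel
    rw [this]
    refine (norm_sub_le _ _).trans ?_
    linarith
  refine (measure_mono hsub).trans ((measure_iUnion_le _).trans ?_)
  rw [tsum_fintype]
  have hball : ∀ ij, volume (Metric.closedBall (x - g (q ij)) ((1 + L) * r)) =
      ENNReal.ofReal (((1 + L) * r) ^ (m + 2) * V) := by
    intro ij
    rw [Measure.addHaar_closedBall _ _ (by positivity), finrank_euclideanSpace_fin,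
      ENNReal.ofReal_mul (by positivity), hV, ENNReal.ofReal_toReal hVtop]
  simp only [hball, Finset.sum_const, Finset.card_univ, Fintype.card_prod, Fintype.card_fin]
  rw [← ENNReal.ofReal_nsmul]
  apply ENNReal.ofReal_le_ofReal
  rw [nsmul_eq_mul]
  push_cast
  have h9 : ((N : ℝ) + 1) * (N + 1) ≤ (3 / r) * (3 / r) := by gcongr
  calc ((N : ℝ) + 1) * (N + 1) * (((1 + L) * r) ^ (m + 2) * V)
      ≤ (3 / r) * (3 / r) * (((1 + L) * r) ^ (m + 2) * V) := by gcongr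
    _ = _ := by rw [mul_pow, pow_add r]; field_simp; norm_num

lemma cod2_null (m : ℕ) (g : unitInterval × unitInterval → EuclideanSpace ℝ (Fin (m + 2)))
    (L : NNReal) (hg : LipschitzWith L g) (E : Set (EuclideanSpace ℝ (Fin (m + 2))))
    (hE : μH[(m : ℝ)] E = 0) : volume {v | ∃ p, g p + v ∈ E} = 0 := by
  obtain ⟨C, hC, hb⟩ := cod2_bound m g L hg
  let ν : OuterMeasure (EuclideanSpace ℝ (Fin (m + 2))) :=
    { measureOf := fun S => volume {v | ∃ p, g p + v ∈ S}
      empty := by simp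
      mono := fun {s t} h => measure_mono fun v ⟨p, hp⟩ => ⟨p, h hp⟩
      iUnion_nat := fun s _ => by
        refine (measure_mono ?_).trans (measure_iUnion_le _)
        rintro v ⟨p, hp⟩
        obtain ⟨i, hi⟩ := Set.mem_iUnion.1 hp
        exact Set.mem_iUnion.2 ⟨i, p, hi⟩ }
  have hle : ν ≤ OuterMeasure.mkMetric (ENNReal.ofReal C • fun r : ENNReal => r ^ (m : ℝ)) := by
    refine OuterMeasure.le_mkMetric _ ν (ENNReal.ofReal (1 / 2)) (by simp) fun s hs => ?_
    rcases s.eq_empty_or_nonempty with rfl | ⟨x, hx⟩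
    · simp
    have htop : Metric.ediam s ≠ ⊤ := ne_top_of_le_ne_top ENNReal.ofReal_ne_top hs
    set d := (Metric.ediam s).toReal with hd
    have hd2 : d ≤ 1 / 2 := by
      rw [hd]; exact ENNReal.toReal_le_of_le_ofReal (by norm_num) hs
    have hd0 : 0 ≤ d := ENNReal.toReal_nonneg
    have hev : ∀ᶠ r in 𝓝[>] d, ν s ≤ ENNReal.ofReal (C * r ^ m) := by
      have : Set.Ioo d 1 ∈ 𝓝[>] d := Ioo_mem_nhdsGT (by linarith)
      filter_upwards [this] with r hr
      suffices hsub : {v | ∃ p, g p + v ∈ s} ⊆ {v | ∃ p, g p + v ∈ Metric.closedBall x r} by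
        exact le_trans (measure_mono (μ := volume) hsub)
          (hb x r (by linarith [hr.1]) hr.2.le)
      rintro v ⟨p, hp⟩
      refine ⟨p, ?_⟩
      rw [Metric.mem_closedBall, dist_edist]
      exact (ENNReal.toReal_mono htop (Metric.edist_le_ediam_of_mem hp hx)).trans hr.1.le
    have hlim : Tendsto (fun r : ℝ => ENNReal.ofReal (C * r ^ m)) (𝓝[>] d)
        (𝓝 (ENNReal.ofReal (C * d ^ m))) := by
      refine Tendsto.mono_left (Continuous.tendsto ?_ d) nhdsWithin_le_nhds
      exact ENNReal.continuous_ofReal.comp (by fun_prop)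
    refine (ge_of_tendsto hlim hev).trans (le_of_eq ?_)
    simp only [Pi.smul_apply, smul_eq_mul]
    rw [ENNReal.ofReal_mul hC.le, ENNReal.ofReal_pow hd0, hd, ENNReal.ofReal_toReal htop,
      ENNReal.rpow_natCast]
  have h := hle E
  rw [OuterMeasure.mkMetric_smul _ ENNReal.ofReal_ne_top (by simpa using hC)] at h
  have h2 : (OuterMeasure.mkMetric (fun r : ENNReal => r ^ (m : ℝ)) :
      OuterMeasure (EuclideanSpace ℝ (Fin (m + 2)))) E = 0 := by
    rw [OuterMeasure.coe_mkMetric]; exact hE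
  rw [smul_apply, h2, smul_zero] at h
  exact le_antisymm h bot_le

lemma cod2_approx {n : ℕ} (F : unitInterval × unitInterval → EuclideanSpace ℝ (Fin n))
    (hF : Continuous F) (ε : ℝ) (hε : 0 < ε) :
    ∃ g : unitInterval × unitInterval → EuclideanSpace ℝ (Fin n), ∃ L : NNReal,
      LipschitzWith L g ∧ ∀ p, dist (g p) (F p) < ε := by
  let P : ℝ × ℝ → unitInterval × unitInterval := fun p =>
    (Set.projIcc 0 1 zero_le_one p.1, Set.projIcc 0 1 zero_le_one p.2)
  have hP : UniformContinuous P := by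
    have h : UniformContinuous (Set.projIcc (0 : ℝ) 1 zero_le_one) :=
      (LipschitzWith.projIcc zero_le_one).uniformContinuous
    exact (h.comp uniformContinuous_fst).prodMk (h.comp uniformContinuous_snd)
  have hF' : UniformContinuous F := CompactSpace.uniformContinuous_of_continuous hF
  obtain ⟨G, hG, hd⟩ := (hF'.comp hP).exists_contDiff_dist_le hε
  let ι : unitInterval × unitInterval → ℝ × ℝ := fun p => (p.1, p.2)
  have hι : LipschitzWith 1 ι := by
    refine LipschitzWith.of_dist_le_mul fun p q => ?_
    simp [ι, Prod.dist_eq, Subtype.dist_eq]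
  have hLL : LocallyLipschitz G := (hG.of_le (by simp : (1 : WithTop ℕ∞) ≤ _)).locallyLipschitz
  obtain ⟨L, hL⟩ := LocallyLipschitzOn.exists_lipschitzOnWith_of_compact
    (s := (Set.univ : Set (unitInterval × unitInterval))) isCompact_univ
    ((hLL.comp hι.locallyLipschitz).locallyLipschitzOn)
  refine ⟨G ∘ ι, L, lipschitzOnWith_univ.1 hL, fun p => ?_⟩
  have := hd (ι p)
  simpa [P, ι, Set.projIcc_val] using this

lemma cod2_key (m : ℕ) (U E : Set (EuclideanSpace ℝ (Fin (m + 2)))) (hU : IsOpen U)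
    (hV : IsOpen (U \ E)) (hE : μH[(m : ℝ)] E = 0)
    (F : unitInterval × unitInterval → EuclideanSpace ℝ (Fin (m + 2)))
    (hF : Continuous F) (hFU : ∀ p, F p ∈ U) (B : Set (unitInterval × unitInterval))
    (hB : IsClosed B) (hBne : B.Nonempty) (hFB : ∀ p ∈ B, F p ∈ U \ E) :
    ∃ H : unitInterval × unitInterval → EuclideanSpace ℝ (Fin (m + 2)), Continuous H ∧
      (∀ p, H p ∈ U \ E) ∧ ∀ p ∈ B, H p = F p := by
  obtain ⟨δ₁, hδ₁, h₁⟩ := (isCompact_range hF).exists_thickening_subset_open hU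
    (Set.range_subset_iff.2 hFU)
  obtain ⟨δ₂, hδ₂, h₂⟩ := (hB.isCompact.image hF).exists_thickening_subset_open hV
    (Set.image_subset_iff.2 hFB)
  set ε := min δ₁ (δ₂ / 2) with hε
  have hε0 : 0 < ε := by positivity
  have hε1 : ε ≤ δ₁ := min_le_left _ _
  have hε2 : ε ≤ δ₂ / 2 := min_le_right _ _
  obtain ⟨g, L, hg, hgF⟩ := cod2_approx F hF (ε / 2) (by positivity)
  have hnull := cod2_null m g L hg E hE
  obtain ⟨v, hvb, hv⟩ : ∃ v ∈ Metric.ball (0 : EuclideanSpace ℝ (Fin (m + 2))) (ε / 2),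
      v ∉ {v | ∃ p, g p + v ∈ E} := by
    by_contra! hcon
    have := measure_mono (μ := volume) (show Metric.ball _ _ ⊆ _ from hcon)
    rw [hnull] at this
    exact (Metric.measure_ball_pos volume (0 : EuclideanSpace ℝ (Fin (m + 2)))
      (half_pos hε0)).not_ge this
  rw [mem_ball_zero_iff] at hvb
  let χ : unitInterval × unitInterval → ℝ :=
    fun p => max 0 (1 - Metric.infDist (F p) (F '' B) / ε)
  have hχc : Continuous χ := by
    have : Continuous fun p => Metric.infDist (F p) (F '' B) :=
      (Metric.continuous_infDist_pt _).comp hF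
    exact continuous_const.max (continuous_const.sub (this.div_const _))
  have hχ0 : ∀ p, 0 ≤ χ p := fun p => le_max_left _ _
  have hχ1 : ∀ p, χ p ≤ 1 := fun p => max_le zero_le_one
    (by have : 0 ≤ Metric.infDist (F p) (F '' B) / ε := div_nonneg Metric.infDist_nonneg hε0.le
        linarith)
  have hclose : ∀ p, ‖g p + v - F p‖ < ε := fun p => by
    have h := hgF p
    rw [dist_eq_norm] at h
    have : g p + v - F p = (g p - F p) + v := by abel
    rw [this]
    exact (norm_add_le _ _).trans_lt (by linarith)
  have hHF : ∀ p, dist (F p + (1 - χ p) • (g p + v - F p)) (F p) < ε := fun p => by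
    rw [dist_eq_norm, add_sub_cancel_left, norm_smul, Real.norm_eq_abs,
      abs_of_nonneg (by linarith [hχ1 p])]
    have h1 : (1 - χ p) * ‖g p + v - F p‖ ≤ 1 * ‖g p + v - F p‖ := by
      gcongr; linarith [hχ0 p]
    linarith [hclose p]
  refine ⟨fun p => F p + (1 - χ p) • (g p + v - F p), ?_, fun p => ?_, fun p hp => ?_⟩
  · have := hg.continuous
    fun_prop
  · rcases (hχ0 p).eq_or_lt with h0 | hpos
    · refine ⟨h₁ (Metric.mem_thickening_iff.2 ⟨F p, ⟨p, rfl⟩, (hHF p).trans_le hε1⟩), ?_⟩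
      intro hmem
      apply hv
      refine ⟨p, ?_⟩
      simpa [← h0] using hmem
    · apply h₂
      have hinf : Metric.infDist (F p) (F '' B) < ε := by
        have h : 0 < 1 - Metric.infDist (F p) (F '' B) / ε := by
          rcases lt_max_iff.1 hpos with h | h
          · exact absurd h (lt_irrefl _)
          · exact h
        rw [sub_pos, div_lt_one hε0] at h
        exact h
      obtain ⟨y, hy, hyd⟩ := (Metric.infDist_lt_iff (hBne.image F)).1 hinf
      refine Metric.mem_thickening_iff.2 ⟨y, hy, ?_⟩
      have := dist_triangle (F p + (1 - χ p) • (g p + v - F p)) (F p) y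
      linarith [hHF p]
  · have : χ p = 1 := by
      have : Metric.infDist (F p) (F '' B) = 0 := Metric.infDist_zero_of_mem ⟨p, hp, rfl⟩
      simp [χ, this]
    simp [this]

/-- removing a relatively closed set of `(n-2)`-dimensional Hausdorff
measure zero from a simply connected open subset of ℝⁿ (n ≥ 3) leaves a simply
connected space. -/
theorem complement_of_codim2_set_simply_connected
    (n : ℕ) (hn : 3 ≤ n)
    (U : Set (EuclideanSpace ℝ (Fin n)))
    (hU_ne : U.Nonempty) (hU_open : IsOpen U)
    (hU_sc : SimplyConnectedSpace U)
    (E : Set (EuclideanSpace ℝ (Fin n)))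
    (hE_sub : E ⊆ U)
    (hE_closed : ∃ C : Set (EuclideanSpace ℝ (Fin n)), IsClosed C ∧ E = C ∩ U)
    (hE_null : μH[(n : ℝ) - 2] E = 0) :
    SimplyConnectedSpace ↥(U \ E) := by
  obtain ⟨m, rfl⟩ : ∃ m, n = m + 2 := ⟨n - 2, by omega⟩
  have hE : μH[(m : ℝ)] E = 0 := by
    have : ((m + 2 : ℕ) : ℝ) - 2 = m := by push_cast; ring
    rwa [this] at hE_null
  have hV : IsOpen (U \ E) := by
    obtain ⟨C, hC, rfl⟩ := hE_closed
    have : U \ (C ∩ U) = U \ C := by ext; simp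
    rw [this]
    exact hU_open.sdiff hC
  let j : C(↥(U \ E), U) := ⟨fun x => ⟨x.1, x.2.1⟩, by fun_prop⟩
  rw [simply_connected_iff_paths_homotopic']
  refine ⟨⟨?_, ?_⟩, ?_⟩
  · -- nonempty
    obtain ⟨x, hx⟩ := hU_ne
    obtain ⟨δ, hδ, hb⟩ := Metric.isOpen_iff.1 hU_open x hx
    have h0 := cod2_null m (fun _ => x) 0 (LipschitzWith.const x) E hE
    by_contra hcon
    have hsub : Metric.ball 0 δ ⊆ {v | ∃ _ : unitInterval × unitInterval, x + v ∈ E} := by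
      intro v hv
      refine ⟨(0, 0), ?_⟩
      by_contra hvE
      exact hcon ⟨⟨x + v, hb (by simpa using hv), hvE⟩⟩
    have := measure_mono (μ := volume) hsub
    rw [h0] at this
    exact (Metric.measure_ball_pos volume (0 : EuclideanSpace ℝ (Fin (m + 2))) hδ).not_ge this
  · intro x y
    let γ : Path (j x) (j y) := PathConnectedSpace.somePath _ _
    obtain ⟨H, hH, hHV, hHB⟩ := cod2_key m U E hU_open hV hE (fun p => (γ p.2 : U).1)
      (by fun_prop) (fun p => (γ p.2).2) {p | p.2 = 0 ∨ p.2 = 1}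
      ((isClosed_eq continuous_snd continuous_const).union
        (isClosed_eq continuous_snd continuous_const)) ⟨(0, 0), Or.inl rfl⟩
      (by
        rintro p (hp | hp)
        · rw [hp, γ.source]; exact x.2
        · rw [hp, γ.target]; exact y.2)
    refine ⟨⟨⟨fun t => ⟨H (0, t), hHV _⟩, by fun_prop⟩, ?_, ?_⟩⟩
    · apply Subtype.ext
      change H (0, 0) = _
      rw [hHB (0, 0) (Or.inl rfl)]
      simp [j]
    · apply Subtype.ext
      change H (0, 1) = _
      rw [hHB (0, 1) (Or.inr rfl)]
      simp [j]
  · intro x y p₁ p₂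
    obtain ⟨F⟩ := SimplyConnectedSpace.paths_homotopic (p₁.map j.continuous) (p₂.map j.continuous)
    have e0 : ∀ t, (F (0, t) : U).1 = p₁ t := fun t => by rw [F.apply_zero]; rfl
    have e1 : ∀ t, (F (1, t) : U).1 = p₂ t := fun t => by rw [F.apply_one]; rfl
    have e2 : ∀ s, (F (s, 0) : U).1 = x := fun s => by rw [F.source]; rfl
    have e3 : ∀ s, (F (s, 1) : U).1 = y := fun s => by rw [F.target]; rfl
    obtain ⟨H, hH, hHV, hHB⟩ := cod2_key m U E hU_open hV hE (fun p => (F p : U).1)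
      (by fun_prop) (fun p => (F p).2)
      ({p | p.1 = 0} ∪ {p | p.1 = 1} ∪ {p | p.2 = 0} ∪ {p | p.2 = 1})
      ((((isClosed_eq continuous_fst continuous_const).union
        (isClosed_eq continuous_fst continuous_const)).union
        (isClosed_eq continuous_snd continuous_const)).union
        (isClosed_eq continuous_snd continuous_const)) ⟨(0, 0), by simp⟩
      (by
        rintro ⟨s, t⟩ (((hp | hp) | hp) | hp) <;> simp only [Set.mem_ofPred_eq] at hp <;> subst hp
        · rw [e0]; exact (p₁ t).2
        · rw [e1]; exact (p₂ t).2
        · rw [e2]; exact x.2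
        · rw [e3]; exact y.2)
    refine ⟨⟨⟨⟨fun p => ⟨H p, hHV p⟩, by fun_prop⟩, fun t => ?_, fun t => ?_⟩, ?_⟩⟩
    · apply Subtype.ext
      change H (0, t) = _
      rw [hHB (0, t) (by simp)]
      exact e0 t
    · apply Subtype.ext
      change H (1, t) = _
      rw [hHB (1, t) (by simp)]
      exact e1 t
    · rintro s t (rfl | rfl)
      · apply Subtype.ext
        change H (s, 0) = (p₁ 0).1
        rw [hHB (s, 0) (by simp), p₁.source]
        exact e2 s
      · apply Subtype.ext
        change H (s, 1) = (p₁ 1).1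
        rw [hHB (s, 1) (by simp), p₁.target]
        exact e3 s
end

section
/- Let n ≥ 3 and let F be a closed subset of ℝⁿ with μH[n−2](F) = 0. Let D̄ denote the closed unit ball of ℝ² = EuclideanSpace ℝ (Fin 2) and ∂D its boundary circle {x ∈ ℝ² : ‖x‖ = 1}. Let f : ℝ² → ℝⁿ be of class C¹ on D̄ (ContDiffOn ℝ 1 f D̄) with f(∂D) ∩ F = ∅. Then there exists g : ℝ² → ℝⁿ of class C¹ on D̄ such that g(x) = f(x) for all x ∈ ∂D and g(D̄) ∩ F = ∅. -/
open Filter Topology MeasureTheory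
open scoped MeasureTheory

lemma aux_cells (δ : ℝ) (h0 : 0 < δ) (h1 : δ ≤ 1) :
    ∃ q : EuclideanSpace ℝ (Fin 2) → ℤ × ℤ, ∃ s : Finset (ℤ × ℤ),
      (∀ x ∈ Metric.closedBall (0 : EuclideanSpace ℝ (Fin 2)) 1, q x ∈ s) ∧
      (s.card : ℝ) ≤ 25 / δ ^ 2 ∧ (∀ x y, q x = q y → dist x y ≤ 2 * δ) := by
  set N : ℕ := ⌈1 / δ⌉₊ with hN
  have hN1 : 1 / δ ≤ N := Nat.le_ceil _
  have hN2 : (N : ℝ) < 1 / δ + 1 := Nat.ceil_lt_add_one (by positivity)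
  have h1δ : 1 ≤ 1 / δ := by rw [le_div_iff₀ h0]; linarith
  refine ⟨fun x => (⌊x 0 / δ⌋, ⌊x 1 / δ⌋),
    Finset.Icc (-(N : ℤ)) N ×ˢ Finset.Icc (-(N : ℤ)) N, ?_, ?_, ?_⟩
  · intro x hx
    have key : ∀ i, ⌊x i / δ⌋ ∈ Finset.Icc (-(N : ℤ)) N := by
      intro i
      have hi : |x i| ≤ 1 := by
        have := PiLp.norm_apply_le x i
        rw [Real.norm_eq_abs] at this
        have h2 : ‖x‖ ≤ 1 := by simpa using hx
        linarith
      obtain ⟨ha, hb⟩ := abs_le.mp hi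
      rw [Finset.mem_Icc]
      have e1 : x i / δ ≤ 1 / δ := by gcongr
      have e2 : -(1 / δ) ≤ x i / δ := by rw [← neg_div]; gcongr
      constructor
      · rw [Int.le_floor]; push_cast; linarith
      · have : (⌊x i / δ⌋ : ℝ) ≤ (N : ℤ) := by
          push_cast
          exact (Int.floor_le _).trans (by linarith)
        exact_mod_cast this
    simp only [Finset.mem_product]
    exact ⟨key 0, key 1⟩
  · have hc : (Finset.Icc (-(N : ℤ)) N).card = 2 * N + 1 := by
      rw [Int.card_Icc]; omega
    rw [Finset.card_product, hc]
    push_cast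
    have : (2 * (N : ℝ) + 1) ≤ 5 * (1 / δ) := by linarith
    have h3 : 25 / δ ^ 2 = (5 * (1 / δ)) * (5 * (1 / δ)) := by field_simp; norm_num
    rw [h3]
    gcongr
  · intro x y hxy
    simp only [Prod.mk.injEq] at hxy
    have key : ∀ i, ⌊x i / δ⌋ = ⌊y i / δ⌋ → |x i - y i| ≤ δ := by
      intro i h
      have := Int.abs_sub_lt_one_of_floor_eq_floor h
      rw [← sub_div, abs_div, abs_of_pos h0, div_lt_one h0] at this
      exact this.le
    have k0 := key 0 hxy.1
    have k1 := key 1 hxy.2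
    rw [EuclideanSpace.dist_eq, Fin.sum_univ_two, Real.dist_eq, Real.dist_eq]
    apply Real.sqrt_le_iff.mpr
    constructor
    · positivity
    · nlinarith [abs_nonneg (x 0 - y 0), abs_nonneg (x 1 - y 1)]

lemma aux_piece (m : ℕ) (K : NNReal)
    (G : EuclideanSpace ℝ (Fin (m+2)) × EuclideanSpace ℝ (Fin 2) → EuclideanSpace ℝ (Fin (m+2)))
    (T : Set (EuclideanSpace ℝ (Fin (m+2)) × EuclideanSpace ℝ (Fin 2)))
    (hT : ∀ p ∈ T, p.2 ∈ Metric.closedBall (0 : EuclideanSpace ℝ (Fin 2)) 1)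
    (hG : LipschitzOnWith K G T) (t : Set (EuclideanSpace ℝ (Fin (m+2))))
    (δ : ℝ) (h0 : 0 < δ) (h1 : δ ≤ 1) (ht : Metric.ediam t ≤ ENNReal.ofReal δ) :
    volume (G '' (T ∩ Prod.fst ⁻¹' t)) ≤
      (ENNReal.ofReal (25 * (2 * K) ^ (m+2)) *
        volume (Metric.closedBall (0 : EuclideanSpace ℝ (Fin (m+2))) 1)) *
        (ENNReal.ofReal δ) ^ m := by
  obtain ⟨q, s, hq, hs, hd⟩ := aux_cells δ h0 h1
  set v := volume (Metric.closedBall (0 : EuclideanSpace ℝ (Fin (m+2))) 1)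
  have hcov : G '' (T ∩ Prod.fst ⁻¹' t) ⊆
      ⋃ j ∈ s, G '' {p | p ∈ T ∧ p.1 ∈ t ∧ q p.2 = j} := by
    rintro _ ⟨p, ⟨hp, hpt⟩, rfl⟩
    simp only [Set.mem_iUnion]
    exact ⟨q p.2, hq _ (hT p hp), p, ⟨hp, hpt, rfl⟩, rfl⟩
  have hpc : ∀ j, volume (G '' {p | p ∈ T ∧ p.1 ∈ t ∧ q p.2 = j}) ≤
      ENNReal.ofReal ((K * (2 * δ)) ^ (m+2)) * v := by
    intro j
    rcases Set.eq_empty_or_nonempty {p | p ∈ T ∧ p.1 ∈ t ∧ q p.2 = j} with h | ⟨p0, hp0⟩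
    · rw [h]; simp
    · have hsub : G '' {p | p ∈ T ∧ p.1 ∈ t ∧ q p.2 = j} ⊆
          Metric.closedBall (G p0) (K * (2 * δ)) := by
        rintro _ ⟨p, hp, rfl⟩
        rw [Metric.mem_closedBall]
        refine (hG.dist_le_mul p hp.1 p0 hp0.1).trans ?_
        gcongr
        rw [Prod.dist_eq]
        apply max_le
        · have : edist p.1 p0.1 ≤ ENNReal.ofReal δ :=
            (Metric.edist_le_ediam_of_mem hp.2.1 hp0.2.1).trans ht
          rw [edist_dist, ENNReal.ofReal_le_ofReal_iff h0.le] at this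
          linarith
        · exact hd _ _ (hp.2.2.trans hp0.2.2.symm)
      refine (measure_mono hsub).trans ?_
      rw [Measure.addHaar_closedBall' _ _ (by positivity)]
      simp [v]
  calc volume (G '' (T ∩ Prod.fst ⁻¹' t))
      ≤ ∑ j ∈ s, volume (G '' {p | p ∈ T ∧ p.1 ∈ t ∧ q p.2 = j}) :=
        (measure_mono hcov).trans (measure_biUnion_finset_le _ _)
    _ ≤ ∑ j ∈ s, ENNReal.ofReal ((K * (2 * δ)) ^ (m+2)) * v := Finset.sum_le_sum fun j _ => hpc j
    _ = (ENNReal.ofReal (s.card) * ENNReal.ofReal ((K * (2 * δ)) ^ (m+2))) * v := by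
        simp [mul_assoc]
    _ = ENNReal.ofReal (s.card * (K * (2 * δ)) ^ (m+2)) * v := by
        rw [ENNReal.ofReal_mul (by positivity)]
    _ ≤ ENNReal.ofReal ((25 * (2 * K) ^ (m+2)) * δ ^ m) * v := by
        refine mul_le_mul_left (ENNReal.ofReal_le_ofReal ?_) v
        calc (s.card : ℝ) * (K * (2 * δ)) ^ (m+2) ≤ 25 / δ ^ 2 * (K * (2 * δ)) ^ (m+2) := by gcongr
          _ = _ := by
            rw [mul_pow, mul_pow, mul_pow, pow_add δ]
            field_simp
    _ = _ := by
        rw [ENNReal.ofReal_mul (by positivity), ENNReal.ofReal_pow h0.le]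
        ring

lemma aux_piece' (m : ℕ) (K : NNReal)
    (G : EuclideanSpace ℝ (Fin (m+2)) × EuclideanSpace ℝ (Fin 2) → EuclideanSpace ℝ (Fin (m+2)))
    (T : Set (EuclideanSpace ℝ (Fin (m+2)) × EuclideanSpace ℝ (Fin 2)))
    (hT : ∀ p ∈ T, p.2 ∈ Metric.closedBall (0 : EuclideanSpace ℝ (Fin 2)) 1)
    (hG : LipschitzOnWith K G T) (t : Set (EuclideanSpace ℝ (Fin (m+2))))
    (ht : Metric.ediam t ≤ ENNReal.ofReal (1/2)) :
    volume (G '' (T ∩ Prod.fst ⁻¹' t)) ≤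
      (ENNReal.ofReal (25 * (2 * K) ^ (m+2)) *
        volume (Metric.closedBall (0 : EuclideanSpace ℝ (Fin (m+2))) 1)) *
        (Metric.ediam t) ^ m := by
  have hfin : Metric.ediam t ≠ ⊤ := ne_top_of_le_ne_top ENNReal.ofReal_ne_top ht
  set d := (Metric.ediam t).toReal with hd
  have hde : ENNReal.ofReal d = Metric.ediam t := ENNReal.ofReal_toReal hfin
  have hd0 : 0 ≤ d := ENNReal.toReal_nonneg
  have hd1 : d ≤ 1/2 := by
    rw [← hde, ENNReal.ofReal_le_ofReal_iff (by norm_num)] at ht; exact ht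
  rw [← hde]
  have hc : (ENNReal.ofReal (25 * (2 * K) ^ (m+2)) *
        volume (Metric.closedBall (0 : EuclideanSpace ℝ (Fin (m+2))) 1)) ≠ ⊤ :=
    ENNReal.mul_ne_top ENNReal.ofReal_ne_top (measure_closedBall_lt_top).ne
  have hlim : Tendsto (fun δ : ℝ => (ENNReal.ofReal (25 * (2 * K) ^ (m+2)) *
        volume (Metric.closedBall (0 : EuclideanSpace ℝ (Fin (m+2))) 1)) *
        (ENNReal.ofReal δ) ^ m) (𝓝[>] d) (𝓝 ((ENNReal.ofReal (25 * (2 * K) ^ (m+2)) *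
        volume (Metric.closedBall (0 : EuclideanSpace ℝ (Fin (m+2))) 1)) *
        (ENNReal.ofReal d) ^ m)) := by
    apply ENNReal.Tendsto.const_mul _ (Or.inr hc)
    exact (((ENNReal.continuous_pow m).comp ENNReal.continuous_ofReal).tendsto d).mono_left
      nhdsWithin_le_nhds
  refine ge_of_tendsto hlim ?_
  filter_upwards [Ioo_mem_nhdsGT (show d < 1 by linarith)] with δ hδ
  refine aux_piece m K G T hT hG t δ (hd0.trans_lt hδ.1) hδ.2.le ?_
  rw [← hde]
  exact ENNReal.ofReal_le_ofReal hδ.1.le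

lemma aux_null (m : ℕ) (K : NNReal)
    (G : EuclideanSpace ℝ (Fin (m+2)) × EuclideanSpace ℝ (Fin 2) → EuclideanSpace ℝ (Fin (m+2)))
    (F : Set (EuclideanSpace ℝ (Fin (m+2)))) (hm : 1 ≤ m)
    (hF : μH[(m : ℝ)] F = 0)
    (T : Set (EuclideanSpace ℝ (Fin (m+2)) × EuclideanSpace ℝ (Fin 2)))
    (hT : ∀ p ∈ T, p.2 ∈ Metric.closedBall (0 : EuclideanSpace ℝ (Fin 2)) 1)
    (hTF : ∀ p ∈ T, p.1 ∈ F)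
    (hG : LipschitzOnWith K G T) : volume (G '' T) = 0 := by
  set C := (ENNReal.ofReal (25 * (2 * K) ^ (m+2)) *
        volume (Metric.closedBall (0 : EuclideanSpace ℝ (Fin (m+2))) 1)) with hC
  have hc : C ≠ ⊤ :=
    ENNReal.mul_ne_top ENNReal.ofReal_ne_top (measure_closedBall_lt_top).ne
  have h2 : (⨅ (t : ℕ → Set (EuclideanSpace ℝ (Fin (m+2)))) (_ : F ⊆ ⋃ n, t n)
      (_ : ∀ n, Metric.ediam (t n) ≤ ENNReal.ofReal (1/2)),
          ∑' n, ⨆ _ : (t n).Nonempty, Metric.ediam (t n) ^ (m : ℝ)) = 0 := by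
    rw [← le_zero_iff, ← hF, Measure.hausdorffMeasure_apply]
    exact le_iSup₂_of_le (ENNReal.ofReal (1/2)) (by simp) le_rfl
  have h3 : ∀ ε : ENNReal, 0 < ε → volume (G '' T) ≤ C * ε := by
    intro ε hε
    have := h2.trans_lt hε
    simp only [iInf_lt_iff] at this
    obtain ⟨t, hFt, htd, hlt⟩ := this
    calc volume (G '' T) ≤ volume (⋃ n, G '' (T ∩ Prod.fst ⁻¹' (t n))) := by
          apply measure_mono
          rintro _ ⟨p, hp, rfl⟩
          obtain ⟨n, hn⟩ := Set.mem_iUnion.mp (hFt (hTF p hp))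
          exact Set.mem_iUnion.mpr ⟨n, p, ⟨hp, hn⟩, rfl⟩
      _ ≤ ∑' n, volume (G '' (T ∩ Prod.fst ⁻¹' (t n))) := measure_iUnion_le _
      _ ≤ ∑' n, C * ⨆ _ : (t n).Nonempty, Metric.ediam (t n) ^ (m : ℝ) := by
          apply ENNReal.tsum_le_tsum
          intro n
          rcases Set.eq_empty_or_nonempty (t n) with h | h
          · simp [h]
          · simp only [h, iSup_pos, ENNReal.rpow_natCast]
            exact aux_piece' m K G T hT hG (t n) (htd n)
      _ = C * ∑' n, ⨆ _ : (t n).Nonempty, Metric.ediam (t n) ^ (m : ℝ) := ENNReal.tsum_mul_left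
      _ ≤ C * ε := by gcongr
  have hlim : Tendsto (fun ε : ENNReal => C * ε) (𝓝[>] 0) (𝓝 (C * 0)) :=
    (ENNReal.Tendsto.const_mul tendsto_id (Or.inr hc)).mono_left nhdsWithin_le_nhds
  rw [mul_zero] at hlim
  rw [← le_zero_iff]
  refine ge_of_tendsto hlim ?_
  filter_upwards [self_mem_nhdsWithin] with ε hε using h3 ε hε

/-- a `C¹` disk whose boundary avoids a closed set `F` of
`(n-2)`-dimensional Hausdorff measure zero can be replaced, keeping the same
boundary values, by a `C¹` disk avoiding `F` entirely. -/
theorem disk_perturbation_off_thin_set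
    (n : ℕ) (hn : 3 ≤ n)
    (F : Set (EuclideanSpace ℝ (Fin n)))
    (hF_closed : IsClosed F)
    (hF_null : μH[(n : ℝ) - 2] F = 0)
    (f : EuclideanSpace ℝ (Fin 2) → EuclideanSpace ℝ (Fin n))
    (hf : ContDiffOn ℝ 1 f (Metric.closedBall (0 : EuclideanSpace ℝ (Fin 2)) 1))
    (hf_bd : f '' (Metric.sphere (0 : EuclideanSpace ℝ (Fin 2)) 1) ∩ F = ∅) :
    ∃ g : EuclideanSpace ℝ (Fin 2) → EuclideanSpace ℝ (Fin n),
      ContDiffOn ℝ 1 g (Metric.closedBall (0 : EuclideanSpace ℝ (Fin 2)) 1) ∧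
      (∀ x ∈ Metric.sphere (0 : EuclideanSpace ℝ (Fin 2)) 1, g x = f x) ∧
      g '' (Metric.closedBall (0 : EuclideanSpace ℝ (Fin 2)) 1) ∩ F = ∅ := by
  obtain ⟨m, rfl⟩ : ∃ m, n = m + 2 := ⟨n - 2, by omega⟩
  have hF : μH[(m : ℝ)] F = 0 := by
    rw [← hF_null]; congr 2; push_cast; ring
  set G : EuclideanSpace ℝ (Fin (m+2)) × EuclideanSpace ℝ (Fin 2) → EuclideanSpace ℝ (Fin (m+2)) :=
    fun p => (1 - ‖p.2‖ ^ 2)⁻¹ • (p.1 - f p.2) with hGdef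
  set S : Set (EuclideanSpace ℝ (Fin (m+2)) × EuclideanSpace ℝ (Fin 2)) :=
    Set.univ ×ˢ Metric.ball 0 1 with hS
  have hpos : ∀ x ∈ Metric.ball (0 : EuclideanSpace ℝ (Fin 2)) 1, 0 < 1 - ‖x‖ ^ 2 := by
    intro x hx
    have : ‖x‖ < 1 := by simpa using hx
    nlinarith [norm_nonneg x]
  have hSconv : Convex ℝ S := convex_univ.prod (convex_ball _ _)
  have hGS : ContDiffOn ℝ 1 G S := by
    have e1 : ContDiffOn ℝ 1 (fun p : EuclideanSpace ℝ (Fin (m+2)) × EuclideanSpace ℝ (Fin 2) =>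
        (1 - ‖p.2‖ ^ 2)⁻¹) S := by
      apply ContDiffOn.inv
      · exact (contDiff_const.sub (contDiff_snd.norm_sq ℝ)).contDiffOn
      · intro p hp
        exact (hpos p.2 hp.2).ne'
    have e2 : ContDiffOn ℝ 1 (fun p : EuclideanSpace ℝ (Fin (m+2)) × EuclideanSpace ℝ (Fin 2) =>
        p.1 - f p.2) S := by
      apply contDiffOn_fst.sub
      exact hf.comp contDiffOn_snd (fun p hp => Metric.ball_subset_closedBall hp.2)
    exact e1.smul e2
  set B : Set (EuclideanSpace ℝ (Fin (m+2)) × EuclideanSpace ℝ (Fin 2)) :=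
    F ×ˢ Metric.ball 0 1 with hB
  have hBS : B ⊆ S := Set.prod_mono (Set.subset_univ _) subset_rfl
  have hloc : ∀ p : EuclideanSpace ℝ (Fin (m+2)) × EuclideanSpace ℝ (Fin 2),
      ∃ t, p ∈ B → t ∈ 𝓝[B] p ∧ ∃ K, LipschitzOnWith K G t := by
    intro p
    by_cases hp : p ∈ B
    · obtain ⟨K, t, ht, hK⟩ := (hGS p (hBS hp)).exists_lipschitzOnWith hSconv
      exact ⟨t, fun _ => ⟨nhdsWithin_mono _ hBS ht, K, hK⟩⟩
    · exact ⟨∅, fun h => absurd h hp⟩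
  choose t ht using hloc
  obtain ⟨c, hcB, hcc, hcov⟩ := TopologicalSpace.countable_cover_nhdsWithin
    (fun p hp => (ht p hp).1)
  have hnull : volume (G '' B) = 0 := by
    have : G '' B ⊆ ⋃ p ∈ c, G '' (t p ∩ B) := by
      rintro _ ⟨b, hb, rfl⟩
      obtain ⟨p, hp, hbp⟩ := Set.mem_iUnion₂.mp (hcov hb)
      exact Set.mem_iUnion₂.mpr ⟨p, hp, b, ⟨hbp, hb⟩, rfl⟩
    refine measure_mono_null this ((measure_biUnion_null_iff hcc).mpr fun p hp => ?_)
    obtain ⟨K, hK⟩ := (ht p (hcB hp)).2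
    exact aux_null m K G F (by omega) hF _
      (fun b hb => Metric.ball_subset_closedBall hb.2.2) (fun b hb => hb.2.1)
      (hK.mono Set.inter_subset_left)
  obtain ⟨v, hv⟩ : ∃ v, v ∉ G '' B := by
    by_contra! h
    rw [Set.eq_univ_of_forall h] at hnull
    exact NeZero.ne (volume : Measure (EuclideanSpace ℝ (Fin (m+2))))
      (Measure.measure_univ_eq_zero.mp hnull)
  refine ⟨fun x => f x + (1 - ‖x‖ ^ 2) • v, ?_, ?_, ?_⟩
  · apply hf.add
    exact ((contDiff_const.sub (contDiff_id.norm_sq ℝ)).smul contDiff_const).contDiffOn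
  · intro x hx
    have : ‖x‖ = 1 := by simpa using hx
    simp [this]
  · rw [Set.eq_empty_iff_forall_notMem]
    rintro _ ⟨⟨x, hx, rfl⟩, hxF⟩
    have hx1 : ‖x‖ ≤ 1 := by simpa using hx
    rcases hx1.lt_or_eq with h | h
    · have hxb : x ∈ Metric.ball (0 : EuclideanSpace ℝ (Fin 2)) 1 := by simpa using h
      apply hv
      refine ⟨(f x + (1 - ‖x‖ ^ 2) • v, x), ⟨hxF, hxb⟩, ?_⟩
      simp only [hGdef, add_sub_cancel_left]
      exact inv_smul_smul₀ (hpos x hxb).ne' v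
    · have : f x ∈ f '' (Metric.sphere 0 1) ∩ F := by
        refine ⟨⟨x, by simpa using h, rfl⟩, ?_⟩
        simpa [h] using hxF
      rw [hf_bd] at this
      exact this
end

section
/- Let n ≥ 3 and let F ⊆ ℝⁿ satisfy μH[n−2](F) = 0. Let D̄ be the closed unit ball of ℝ² = EuclideanSpace ℝ (Fin 2). Then, in the product metric space ℝ² × ℝⁿ (with the product metric), the n-dimensional Hausdorff measure of the product set D̄ × F is zero: μH[n](D̄ ×ˢ F) = 0. -/
open Filter Topology MeasureTheory
open scoped MeasureTheory

open scoped NNReal ENNReal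

lemma aux_cover {X : Type*} [EMetricSpace X] [MeasurableSpace X] [BorelSpace X]
    (d : ℝ) (hd : 0 < d) (F : Set X) (hF : μH[d] F = 0) (ε : ℝ≥0) (hε : 0 < ε) :
    ∃ (t : ℕ → Set X) (δ : ℕ → ℝ≥0), F ⊆ ⋃ k, t k ∧ (∀ k, 0 < δ k) ∧ (∀ k, δ k ≤ ε) ∧
      (∀ k, Metric.ediam (t k) ≤ δ k) ∧ ∑' k, (δ k : ℝ≥0∞) ^ d ≤ ε := by
  obtain ⟨η, hη0, hη1, hη2⟩ : ∃ η : ℝ≥0, 0 < η ∧ 2 * η ≤ ε ∧ 2 * η ≤ ε ^ d := by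
    refine ⟨min (ε / 2) (ε ^ d / 2), ?_, ?_, ?_⟩
    · have := NNReal.rpow_pos (p := d) hε
      exact lt_min (by positivity) (by positivity)
    · calc _ ≤ 2 * (ε / 2) := by gcongr; exact min_le_left _ _
        _ = ε := by field_simp
    · calc _ ≤ 2 * (ε ^ d / 2) := by gcongr; exact min_le_right _ _
        _ = ε ^ d := by field_simp
  have hη0' : (0 : ℝ≥0∞) < η := by exact_mod_cast hη0
  rw [Measure.hausdorffMeasure_apply] at hF
  have h1 := (ENNReal.iSup_eq_zero.1 ((ENNReal.iSup_eq_zero.1 hF) 1)) one_pos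
  have h2 := h1.trans_lt hη0'
  simp only [iInf_lt_iff] at h2
  obtain ⟨t, htF, -, hsum⟩ := h2
  obtain ⟨e, he0, hesum⟩ := ENNReal.exists_pos_sum_of_countable hη0'.ne' ℕ
  set g : ℕ → ℝ≥0∞ := fun k => (⨆ _ : (t k).Nonempty, Metric.ediam (t k) ^ d) + e k with hg
  have hgsum : ∑' k, g k ≤ (2 * η : ℝ≥0) := by
    rw [hg, ENNReal.tsum_add]
    push_cast
    rw [two_mul]
    exact add_le_add hsum.le hesum.le
  have hgk : ∀ k, g k ≤ (2 * η : ℝ≥0) := fun k => (ENNReal.le_tsum k).trans hgsum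
  have hgtop : ∀ k, g k ≠ ∞ := fun k => ne_top_of_le_ne_top ENNReal.coe_ne_top (hgk k)
  have hg0 : ∀ k, 0 < g k := fun k => by
    have : (0 : ℝ≥0∞) < e k := by exact_mod_cast he0 k
    exact this.trans_le le_add_self
  have hdn : (g · ^ (1 / d)) = fun k => (((g k) ^ (1 / d)).toNNReal : ℝ≥0∞) := by
    funext k
    rw [ENNReal.coe_toNNReal]
    exact ENNReal.rpow_ne_top_of_nonneg (by positivity) (hgtop k)
  have hdn' := fun k => congrFun hdn k
  refine ⟨t, fun k => ((g k) ^ (1 / d)).toNNReal, htF, ?_, ?_, ?_, ?_⟩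
  · intro k
    rw [← ENNReal.coe_pos, ← hdn']
    exact ENNReal.rpow_pos (hg0 k) (hgtop k)
  · intro k
    rw [← ENNReal.coe_le_coe, ← hdn', one_div, ENNReal.rpow_inv_le_iff hd,
      ← ENNReal.coe_rpow_of_nonneg _ hd.le]
    exact (hgk k).trans (by exact_mod_cast hη2)
  · intro k
    rw [← hdn', one_div, ENNReal.le_rpow_inv_iff hd]
    rcases (t k).eq_empty_or_nonempty with h | h
    · simp [h, hd]
    · simp [hg, h]
  · calc _ = ∑' k, g k := by
          congr 1; funext k
          rw [← hdn', ← ENNReal.rpow_mul, one_div, inv_mul_cancel₀ hd.ne', ENNReal.rpow_one]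
      _ ≤ _ := hgsum.trans (by exact_mod_cast hη1)

lemma aux_disk (δ : ℝ≥0) (h0 : 0 < δ) (h1 : δ ≤ 1) :
    ∃ (M : ℕ) (A : Fin M × Fin M → Set (EuclideanSpace ℝ (Fin 2))),
      (M : ℝ≥0) * δ ≤ 6 ∧ Metric.closedBall 0 1 ⊆ ⋃ i, A i ∧
      ∀ i, Metric.ediam (A i) ≤ δ := by
  have h0' : (0 : ℝ) < δ := by exact_mod_cast h0
  have h1' : (δ : ℝ) ≤ 1 := by exact_mod_cast h1
  refine ⟨⌈(4 / δ : ℝ)⌉₊ + 1, fun p => {x | ∀ l : Fin 2,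
      ((![(p.1 : ℕ), (p.2 : ℕ)] l : ℕ) : ℝ) ≤ (x l + 1) * (2 / δ) ∧
      (x l + 1) * (2 / δ) < ((![(p.1 : ℕ), (p.2 : ℕ)] l : ℕ) : ℝ) + 1}, ?_, ?_, ?_⟩
  · rw [← NNReal.coe_le_coe]
    push_cast
    have := (Nat.ceil_lt_add_one (a := (4 / δ : ℝ)) (by positivity)).le
    calc ((⌈(4 / δ : ℝ)⌉₊ : ℝ) + 1) * δ ≤ (4 / δ + 1 + 1) * δ := by gcongr
      _ = 4 + 2 * δ := by field_simp; ring
      _ ≤ 6 := by linarith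
  · intro x hx
    have hx1 : ‖x‖ ≤ 1 := by simpa using hx
    have hb : ∀ l, 0 ≤ (x l + 1) * (2 / δ) ∧ (x l + 1) * (2 / δ) ≤ 4 / δ := by
      intro l
      have := (PiLp.norm_apply_le x l).trans hx1
      rw [Real.norm_eq_abs, abs_le] at this
      constructor
      · exact mul_nonneg (by linarith) (by positivity)
      · calc _ ≤ 2 * (2 / (δ : ℝ)) := by gcongr; linarith
          _ = 4 / δ := by ring
    have hM : ∀ l, ⌊(x l + 1) * (2 / δ)⌋₊ < ⌈(4 / δ : ℝ)⌉₊ + 1 := fun l =>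
      Nat.lt_succ_of_le ((Nat.floor_le_floor (hb l).2).trans (Nat.floor_le_ceil _))
    refine Set.mem_iUnion.2 ⟨(⟨_, hM 0⟩, ⟨_, hM 1⟩), ?_⟩
    intro l
    have := And.intro (Nat.floor_le (hb l).1) (Nat.lt_floor_add_one ((x l + 1) * (2 / δ)))
    fin_cases l <;> simpa using this
  · intro p
    refine Metric.ediam_le fun x hx y hy => ?_
    rw [edist_nndist, ENNReal.coe_le_coe, ← NNReal.coe_le_coe, coe_nndist, EuclideanSpace.dist_eq]
    refine Real.sqrt_le_iff.2 ⟨h0'.le, ?_⟩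
    have hl : ∀ l, dist (x l) (y l) ≤ δ / 2 := by
      intro l
      have a := hx l
      have b := hy l
      have e1 : x l - y l = ((x l + 1) * (2 / δ) - (y l + 1) * (2 / δ)) * (δ / 2) := by
        field_simp; ring
      rw [Real.dist_eq, e1, abs_mul, abs_of_pos (a := (δ / 2 : ℝ)) (by positivity)]
      have : |(x l + 1) * (2 / δ) - (y l + 1) * (2 / δ)| ≤ 1 :=
        abs_le.2 ⟨by linarith, by linarith⟩
      nlinarith
    rw [Fin.sum_univ_two]
    have a := pow_le_pow_left₀ dist_nonneg (hl 0) 2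
    have b := pow_le_pow_left₀ dist_nonneg (hl 1) 2
    nlinarith

/-- if `μH[n-2](F) = 0` in ℝⁿ, then the product `D̄ × F` with the
closed unit disk of ℝ² has zero `n`-dimensional Hausdorff measure in the product
metric space ℝ² × ℝⁿ. -/
theorem product_with_disk_hausdorff_null
    (n : ℕ) (hn : 3 ≤ n)
    (F : Set (EuclideanSpace ℝ (Fin n)))
    (hF_null : μH[(n : ℝ) - 2] F = 0) :
    μH[(n : ℝ)] ((Metric.closedBall (0 : EuclideanSpace ℝ (Fin 2)) 1) ×ˢ F :
      Set (EuclideanSpace ℝ (Fin 2) × EuclideanSpace ℝ (Fin n))) = 0 := by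
  have hn' : (3 : ℝ) ≤ n := by exact_mod_cast hn
  have hd : (0 : ℝ) < (n : ℝ) - 2 := by linarith
  let ε : ℕ → ℝ≥0 := fun m => 1 / ((m : ℝ≥0) + 1)
  have hε0 : ∀ m, 0 < ε m := fun m => by positivity
  have hε1 : ∀ m, ε m ≤ 1 := fun m => by
    simp only [ε]
    exact div_le_one_of_le₀ (by simp) (by simp)
  have hεt : Tendsto (fun m => (ε m : ℝ≥0∞)) atTop (𝓝 0) := by
    rw [← ENNReal.coe_zero, ENNReal.tendsto_coe]
    exact tendsto_one_div_add_atTop_nhds_zero_nat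
  choose t δ hF hδ0 hδε htδ hsum using fun m => aux_cover _ hd F hF_null (ε m) (hε0 m)
  choose M A hM hA hAd using fun m k => aux_disk (δ m k) (hδ0 m k) ((hδε m k).trans (hε1 m))
  have hdiam : ∀ m (p : Σ k, Fin (M m k) × Fin (M m k)),
      Metric.ediam (A m p.1 p.2 ×ˢ t m p.1) ≤ δ m p.1 := by
    intro m p
    refine Metric.ediam_le fun x hx y hy => ?_
    rw [Prod.edist_eq]
    exact max_le ((Metric.edist_le_ediam_of_mem hx.1 hy.1).trans (hAd _ _ _))
      ((Metric.edist_le_ediam_of_mem hx.2 hy.2).trans (htδ _ _))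
  have key := Measure.hausdorffMeasure_le_liminf_tsum (ι := fun m => Σ k, Fin (M m k) × Fin (M m k))
    (n : ℝ) ((Metric.closedBall (0 : EuclideanSpace ℝ (Fin 2)) 1) ×ˢ F) (l := atTop)
    (fun m => (ε m : ℝ≥0∞)) hεt (fun m p => A m p.1 p.2 ×ˢ t m p.1)
    (Eventually.of_forall fun m p => (hdiam m p).trans (by exact_mod_cast hδε m p.1))
    (Eventually.of_forall fun m x hx => by
      obtain ⟨k, hk⟩ := Set.mem_iUnion.1 (hF m hx.2)
      obtain ⟨i, hi⟩ := Set.mem_iUnion.1 (hA m k hx.1)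
      exact Set.mem_iUnion.2 ⟨⟨k, i⟩, hi, hk⟩)
  have bound : ∀ m, ∑' p : (Σ k, Fin (M m k) × Fin (M m k)),
      Metric.ediam (A m p.1 p.2 ×ˢ t m p.1) ^ (n : ℝ) ≤ 36 * (ε m : ℝ≥0∞) := by
    intro m
    calc _ ≤ ∑' p : (Σ k, Fin (M m k) × Fin (M m k)), (δ m p.1 : ℝ≥0∞) ^ (n : ℝ) :=
          ENNReal.tsum_le_tsum fun p => ENNReal.rpow_le_rpow (hdiam m p) (by positivity)
      _ = ∑' k, ((M m k : ℝ≥0∞) * δ m k) ^ 2 * (δ m k : ℝ≥0∞) ^ ((n : ℝ) - 2) := by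
          rw [ENNReal.tsum_sigma']
          congr 1; funext k
          have hne : (δ m k : ℝ≥0∞) ≠ 0 := by exact_mod_cast (hδ0 m k).ne'
          have : (δ m k : ℝ≥0∞) ^ (n : ℝ) = (δ m k : ℝ≥0∞) ^ 2 * (δ m k : ℝ≥0∞) ^ ((n : ℝ) - 2) := by
            rw [← ENNReal.rpow_two, ← ENNReal.rpow_add _ _ hne ENNReal.coe_ne_top]
            congr 1; ring
          rw [tsum_fintype]
          simp only [Finset.sum_const, Finset.card_univ, Fintype.card_prod, Fintype.card_fin,
            nsmul_eq_mul, this]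
          push_cast
          ring
      _ ≤ ∑' k, 36 * (δ m k : ℝ≥0∞) ^ ((n : ℝ) - 2) := by
          refine ENNReal.tsum_le_tsum fun k => ?_
          have h6 : (M m k : ℝ≥0∞) * δ m k ≤ 6 := by exact_mod_cast hM m k
          gcongr
          calc _ ≤ (6 : ℝ≥0∞) ^ 2 := by gcongr
            _ = 36 := by norm_num
      _ ≤ _ := by
          rw [ENNReal.tsum_mul_left]
          gcongr
          exact hsum m
  refine le_antisymm (key.trans ?_) zero_le
  have hlim : Tendsto (fun m => 36 * (ε m : ℝ≥0∞)) atTop (𝓝 0) := by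
    simpa using ENNReal.Tendsto.const_mul hεt (Or.inr (by norm_num : (36 : ℝ≥0∞) ≠ ∞))
  exact (liminf_le_liminf (Eventually.of_forall bound)).trans hlim.liminf_eq.le
end

section
/- Let n ≥ 2, let λ > 0, let A be a linear isometric automorphism of ℝⁿ, and define g on ℝⁿ ∖ {0} by g(x) = (λ/‖x‖²) • (A x). Assume g(g(x)) = x for all x ≠ 0 and that g has no fixed point in ℝⁿ ∖ {0}. Then A = −id, i.e. g(x) = −(λ/‖x‖²) • x for all x ≠ 0; moreover, with h(x) = √λ • x, one has h⁻¹(g(h(x))) = −(1/‖x‖²) • x for all x ≠ 0, so g is conjugate by a homothety to the standard inversion ι(x) = −x/‖x‖². -/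
open Filter Topology

/-- a fixed-point-free conformal involution of `ℝⁿ \ {0}` of the form
`g(x) = (λ/‖x‖²) • A x` has `A = -id`, and `g` is conjugate by the homothety
`h(x) = √λ • x` to the standard inversion `ι(x) = -x/‖x‖²`. -/
theorem involution_conjugate_to_inversion
    (n : ℕ) (hn : 2 ≤ n)
    (lam : ℝ) (hlam : 0 < lam)
    (A : EuclideanSpace ℝ (Fin n) ≃ₗᵢ[ℝ] EuclideanSpace ℝ (Fin n))
    (g : EuclideanSpace ℝ (Fin n) → EuclideanSpace ℝ (Fin n))
    (hg : ∀ x : EuclideanSpace ℝ (Fin n), x ≠ 0 → g x = (lam / ‖x‖ ^ 2) • A x)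
    (hg_inv : ∀ x : EuclideanSpace ℝ (Fin n), x ≠ 0 → g (g x) = x)
    (hg_free : ∀ x : EuclideanSpace ℝ (Fin n), x ≠ 0 → g x ≠ x) :
    (∀ x : EuclideanSpace ℝ (Fin n), A x = -x) ∧
    (∀ x : EuclideanSpace ℝ (Fin n), x ≠ 0 → g x = -((lam / ‖x‖ ^ 2) • x)) ∧
    (∀ x : EuclideanSpace ℝ (Fin n), x ≠ 0 →
      (Real.sqrt lam)⁻¹ • g (Real.sqrt lam • x) = -((1 / ‖x‖ ^ 2) • x)) := by
  have hAA : ∀ x, A (A x) = x := by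
    intro x
    by_cases hx : x = 0
    · simp [hx]
    have hxn : ‖x‖ ≠ 0 := norm_ne_zero_iff.mpr hx
    have hAx : A x ≠ 0 := fun h => hx (by simpa using h)
    have hc : lam / ‖x‖ ^ 2 ≠ 0 := by positivity
    have hgx : g x ≠ 0 := by
      rw [hg x hx]
      exact smul_ne_zero hc hAx
    have h := hg_inv x hx
    rw [hg _ hgx, hg x hx, norm_smul, map_smul, smul_smul, A.norm_map, Real.norm_eq_abs,
      mul_pow, sq_abs] at h
    have h1 : lam / ((lam / ‖x‖ ^ 2) ^ 2 * ‖x‖ ^ 2) * (lam / ‖x‖ ^ 2) = 1 := by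
      field_simp
    rwa [h1, one_smul] at h
  have hs : Real.sqrt lam ≠ 0 := (Real.sqrt_pos.mpr hlam).ne'
  have hss : Real.sqrt lam ^ 2 = lam := Real.sq_sqrt hlam.le
  have hA : ∀ x, A x = -x := by
    intro x
    rw [eq_neg_iff_add_eq_zero]
    by_contra hv
    have hAv : A (A x + x) = A x + x := by rw [map_add, hAA, add_comm]
    generalize A x + x = v at hv hAv
    have hvn : ‖v‖ ≠ 0 := norm_ne_zero_iff.mpr hv
    have hc : Real.sqrt lam / ‖v‖ ≠ 0 := div_ne_zero hs hvn
    have hw := smul_ne_zero hc hv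
    apply hg_free _ hw
    rw [hg _ hw, map_smul, hAv, norm_smul, Real.norm_eq_abs, mul_pow, sq_abs, div_pow, hss]
    have h1 : lam / (lam / ‖v‖ ^ 2 * ‖v‖ ^ 2) = 1 := by
      field_simp
    rw [h1, one_smul]
  have hG : ∀ x, x ≠ 0 → g x = -((lam / ‖x‖ ^ 2) • x) := by
    intro x hx
    rw [hg x hx, hA, smul_neg]
  refine ⟨hA, hG, ?_⟩
  intro x hx
  have hxn : ‖x‖ ≠ 0 := norm_ne_zero_iff.mpr hx
  rw [hG _ (smul_ne_zero hs hx), norm_smul, Real.norm_eq_abs, mul_pow, sq_abs, hss, smul_neg,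
    smul_smul, smul_smul]
  congr 2
  field_simp
end

section
/- Let X be a Hausdorff topological space, Y a topological space, and f : X → Y a continuous open map. Suppose D ⊆ X is a dense open subset such that the restriction of f to D is injective. Then f is injective on all of X. -/
open Filter Topology

/-- a continuous open map into no-matter-which space, from a Hausdorff
space, which is injective on a dense open subset, is injective. -/
theorem injective_of_injOn_dense_open
    {X Y : Type*} [TopologicalSpace X] [T2Space X] [TopologicalSpace Y]
    (f : X → Y) (hf_cont : Continuous f) (hf_open : IsOpenMap f)
    (D : Set X) (hD_open : IsOpen D) (hD_dense : Dense D)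
    (hf_inj : Set.InjOn f D) :
    Function.Injective f := by
  intro x y hxy
  by_contra hne
  obtain ⟨U, V, hU, hV, hxU, hyV, hUV⟩ := t2_separation hne
  obtain ⟨a, ⟨haU, b, hbV, hba⟩, haD⟩ := hD_dense.inter_open_nonempty
    (U ∩ f ⁻¹' (f '' V)) (hU.inter ((hf_open V hV).preimage hf_cont))
    ⟨x, hxU, y, hyV, hxy.symm⟩
  obtain ⟨c, ⟨hcV, d, ⟨hdU, hdD⟩, hdc⟩, hcD⟩ := hD_dense.inter_open_nonempty
    (V ∩ f ⁻¹' (f '' (U ∩ D)))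
    (hV.inter ((hf_open _ (hU.inter hD_open)).preimage hf_cont))
    ⟨b, hbV, a, ⟨haU, haD⟩, hba.symm⟩
  have h : d = c := hf_inj hdD hcD hdc
  exact Set.disjoint_left.mp hUV hdU (h ▸ hcV)
end
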